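/- arXiv:1607.03084 — 2 statements merged into one kernel-verified Lean document; each statement's English description precedes it below -/
import Mathlib

section
/- Let n ≥ 1, T ≥ 10 be such that T ≥ n, let ε = 1/(1600e) and λ ∈ (0,1/2). Let p be a (1/e)-approximately log-concave probability measure supported on a convex body 𝒦 ⊂ ℝⁿ of diameter at most T, with mean μ(p) and covariance matrix Cov(p), and let c[p] be the Gaussian measure N(μ(p), (ε²/(n·log T))·(λ/(2−λ))·Cov(p)). Let f : ℝⁿ → [0,∞) be a convex, T-Lipschitz function with f(x) ∈ [0,1] for all x ∈ 𝒦. Then ∫ f dc[p] ≤ E_{C∼c[p], X∼p independent}[ f((1−λ)C + λX) ] + 1/T². -/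
open MeasureTheory ProbabilityTheory Real

noncomputable section

/-- A nonnegative function `g` is log-concave if it satisfies the pointwise
multiplicative concavity inequality (equivalently, `g = exp` of a concave
function, with the value `0 = exp (-∞)` allowed). -/
def IsLogConcave {E : Type*} [AddCommMonoid E] [SMul ℝ E] (g : E → ℝ) : Prop :=
  (∀ x, 0 ≤ g x) ∧
    ∀ x y : E, ∀ a b : ℝ, 0 ≤ a → 0 ≤ b → a + b = 1 →
      g x ^ a * g y ^ b ≤ g (a • x + b • y)

/-- A density `p` is `ε`-approximately log-concave if there is a log-concave
function `g` with `ε • g ≤ p ≤ (1/ε) • g` pointwise. -/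
def ApproxLogConcave {E : Type*} [AddCommMonoid E] [SMul ℝ E] (ε : ℝ) (p : E → ℝ) : Prop :=
  ∃ g : E → ℝ, IsLogConcave g ∧ ∀ x, ε * g x ≤ p x ∧ p x ≤ (1 / ε) * g x

/-- Mean (barycenter) of the probability density `p` on `ℝⁿ`. -/
def densMean (n : ℕ) (p : EuclideanSpace ℝ (Fin n) → ℝ) : EuclideanSpace ℝ (Fin n) :=
  ∫ x, p x • x

/-- Covariance matrix of the probability density `p` on `ℝⁿ`. -/
def densCov (n : ℕ) (p : EuclideanSpace ℝ (Fin n) → ℝ) : Matrix (Fin n) (Fin n) ℝ :=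
  Matrix.of fun i j => ∫ x, p x * ((x i - densMean n p i) * (x j - densMean n p j))

/-- The (Mahalanobis-type) norm `‖x‖_A = √(xᵀ A x)` associated with a matrix `A`. -/
def mahal (n : ℕ) (A : Matrix (Fin n) (Fin n) ℝ) (x : EuclideanSpace ℝ (Fin n)) : ℝ :=
  Real.sqrt (∑ i, ∑ j, x i * A i j * x j)

/-- Density of the Gaussian measure `N(μ, S)` on `ℝⁿ`. -/
def gaussPdf (n : ℕ) (μ : EuclideanSpace ℝ (Fin n)) (S : Matrix (Fin n) (Fin n) ℝ)
    (x : EuclideanSpace ℝ (Fin n)) : ℝ :=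
  (2 * π) ^ (-(n : ℝ) / 2) * S.det ^ (-(1 : ℝ) / 2) *
    Real.exp (-(1 / 2) * ∑ i, ∑ j, (x i - μ i) * S⁻¹ i j * (x j - μ j))

/-!
Write `m` and `Σ` for the mean and the covariance matrix of `p`, and `κ Σ` for the covariance matrix
of its Gaussian core. With `δ = ε² / (n log T)`, the coefficient `κ = δ λ / (2 - λ)` solves
`(1 - λ)² κ + λ² δ = κ`, so `N(m, κ Σ)` is the law of `(1 - λ) C + λ (m + W)` with `C ∼ N(m, κ Σ)`
and `W ∼ N(0, δ Σ)` independent. Conditionally on `C`, it remains to compare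
`𝔼 h (m + W)` with `𝔼 h X`, `X ∼ p`, for a convex Lipschitz function `h`.

A convex `h` satisfies `(h (m + v) + h (m - v)) / 2 ≤ 𝔼 h X` as soon as `v` lies in the zonoid of
`p`, that is, `2 l v ≤ 𝔼 |l (X - m)|` for all linear forms `l`. The Prékopa–Leindler inequality,
which survives approximate log-concavity up to a constant factor, implies the reverse Hölder
inequality `√Var (l X) ≤ c 𝔼 |l (X - m)|`. Hence the zonoid contains every `√(δ Σ) z` with
`‖z‖ ≤ 8 √(n log T)`, and as `W` is symmetric only the Gaussian tail outside the zonoid contributes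
an error, of size at most `1 / T ^ 2`.
-/

open scoped ENNReal NNReal Pointwise

/-! ### The Prékopa–Leindler inequality -/

theorem volume_add_volume_le_volume_add_of_isCompact {A B : Set ℝ} (hA : IsCompact A)
    (hB : IsCompact B) (hA0 : A.Nonempty) (hB0 : B.Nonempty) :
    volume A + volume B ≤ volume (A + B) := by
  obtain ⟨a, haA, ha⟩ := hA.exists_isGreatest hA0
  obtain ⟨b, hbB, hb⟩ := hB.exists_isLeast hB0
  have hdisj : AEDisjoint volume (b +ᵥ A) (a +ᵥ B) := by
    refine measure_mono_null (t := {a + b}) ?_ (by simp)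
    rintro _ ⟨⟨x, hx, rfl⟩, ⟨y, hy, hxy⟩⟩
    have hxa := ha hx
    have hby := hb hy
    simp only [vadd_eq_add, Set.mem_singleton_iff] at hxy ⊢
    linarith
  calc volume A + volume B = volume (b +ᵥ A) + volume (a +ᵥ B) := by
        rw [measure_vadd, measure_vadd]
    _ = volume ((b +ᵥ A) ∪ (a +ᵥ B)) :=
        (measure_union₀ (hB.vadd a).measurableSet.nullMeasurableSet hdisj).symm
    _ ≤ volume (A + B) := by
        refine measure_mono (Set.union_subset ?_ (Set.vadd_set_subset_vadd haA))
        rw [add_comm A B]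
        exact Set.vadd_set_subset_vadd hbB

theorem volume_add_volume_le_volume_add {A B : Set ℝ} (hA : MeasurableSet A)
    (hB : MeasurableSet B) (hA0 : A.Nonempty) (hB0 : B.Nonempty) :
    volume A + volume B ≤ volume (A + B) := by
  obtain ⟨x, hx⟩ := hA0
  obtain ⟨y, hy⟩ := hB0
  simp only [hA.measure_eq_iSup_isCompact, hB.measure_eq_iSup_isCompact, iSup_and']
  refine ENNReal.biSup_add_biSup_le' ⟨∅, by simp⟩ ⟨∅, by simp⟩ ?_
  rintro K ⟨hKA, hK⟩ L ⟨hLB, hL⟩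
  calc volume K + volume L ≤ volume (insert x K) + volume (insert y L) := by
        gcongr <;> exact Set.subset_insert _ _
    _ ≤ volume (insert x K + insert y L) :=
        volume_add_volume_le_volume_add_of_isCompact (hK.insert x) (hL.insert y)
          (Set.insert_nonempty _ _) (Set.insert_nonempty _ _)
    _ ≤ volume (A + B) :=
        measure_mono (Set.add_subset_add (Set.insert_subset hx hKA) (Set.insert_subset hy hLB))

theorem lintegral_eq_setLIntegral_meas_lt_of_le_one {α : Type*} [MeasurableSpace α]
    (μ : Measure α) {F : α → ℝ≥0∞} (hF : AEMeasurable F μ) (hF1 : ∀ x, F x ≤ 1) :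
    ∫⁻ x, F x ∂μ = ∫⁻ t in Set.Ioo (0 : ℝ) 1, μ {x | ENNReal.ofReal t < F x} := by
  have hFtop : ∀ x, F x ≠ ∞ := fun x => ne_top_of_le_ne_top ENNReal.one_ne_top (hF1 x)
  have hlt : ∀ t : ℝ, 0 < t → ∀ x, t < (F x).toReal ↔ ENNReal.ofReal t < F x := fun t ht x =>
    (ENNReal.ofReal_lt_iff_lt_toReal ht.le (hFtop x)).symm
  calc ∫⁻ x, F x ∂μ = ∫⁻ x, ENNReal.ofReal (F x).toReal ∂μ := by
        simp_rw [ENNReal.ofReal_toReal (hFtop _)]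
    _ = ∫⁻ t in Set.Ioi (0 : ℝ), μ {x | t < (F x).toReal} :=
        lintegral_eq_lintegral_meas_lt μ (.of_forall fun _ => ENNReal.toReal_nonneg)
          hF.ennreal_toReal
    _ = ∫⁻ t in Set.Ioi (0 : ℝ), (Set.Iio 1).indicator
          (fun t => μ {x | ENNReal.ofReal t < F x}) t := by
        refine setLIntegral_congr_fun measurableSet_Ioi fun t (ht : 0 < t) => ?_
        simp only [hlt t ht]
        rcases lt_or_ge t 1 with ht1 | ht1
        · rw [Set.indicator_of_mem (Set.mem_Iio.2 ht1)]
        · rw [Set.indicator_of_notMem (by simpa using ht1)]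
          convert measure_empty (μ := μ)
          refine Set.eq_empty_of_forall_notMem fun x hx => ?_
          exact absurd ((hF1 x).trans (ENNReal.one_le_ofReal.2 ht1)) (not_le.2 hx)
    _ = ∫⁻ t in Set.Ioo (0 : ℝ) 1, μ {x | ENNReal.ofReal t < F x} := by
        rw [setLIntegral_indicator measurableSet_Iio, Set.inter_comm, Set.Ioi_inter_Iio]

theorem ofReal_mul_volume_superlevel_add_le {a b : ℝ} (ha : 0 < a) (hb : 0 < b)
    (hab : a + b = 1) {F G H : ℝ → ℝ≥0∞} (hF : Measurable F) (hG : Measurable G)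
    (h : ∀ x y, F x ^ a * G y ^ b ≤ H (a • x + b • y)) {s : ℝ≥0∞} (hs0 : s ≠ 0) (hs : s ≠ ∞)
    (hFs : ∃ x, s < F x) (hGs : ∃ x, s < G x) :
    ENNReal.ofReal a * volume {x | s < F x} + ENNReal.ofReal b * volume {x | s < G x}
      ≤ volume {x | s < H x} := by
  have hsub : a • {x | s < F x} + b • {x | s < G x} ⊆ {x | s < H x} := by
    rintro _ ⟨_, ⟨x, hx, rfl⟩, _, ⟨y, hy, rfl⟩, rfl⟩
    calc s = s ^ a * s ^ b := by rw [← ENNReal.rpow_add _ _ hs0 hs, hab, ENNReal.rpow_one]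
      _ < F x ^ a * G y ^ b :=
          ENNReal.mul_lt_mul (ENNReal.rpow_lt_rpow hx ha) (ENNReal.rpow_lt_rpow hy hb)
      _ ≤ H (a • x + b • y) := h x y
  calc ENNReal.ofReal a * volume {x | s < F x} + ENNReal.ofReal b * volume {x | s < G x}
      = volume (a • {x | s < F x}) + volume (b • {x | s < G x}) := by
        simp [Measure.addHaar_smul, abs_of_pos, ha, hb]
    _ ≤ volume (a • {x | s < F x} + b • {x | s < G x}) :=
        volume_add_volume_le_volume_add
          ((measurableSet_lt measurable_const hF).const_smul₀ a)
          ((measurableSet_lt measurable_const hG).const_smul₀ b)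
          (Set.Nonempty.smul_set hFs) (Set.Nonempty.smul_set hGs)
    _ ≤ volume {x | s < H x} := measure_mono hsub

theorem ofReal_mul_lintegral_add_le_of_iSup_eq_one {a b : ℝ} (ha : 0 < a) (hb : 0 < b)
    (hab : a + b = 1) {F G H : ℝ → ℝ≥0∞} (hF : Measurable F) (hG : Measurable G)
    (hH : Measurable H) (hF1 : ⨆ x, F x = 1) (hG1 : ⨆ x, G x = 1)
    (h : ∀ x y, F x ^ a * G y ^ b ≤ H (a • x + b • y)) :
    ENNReal.ofReal a * (∫⁻ x, F x) + ENNReal.ofReal b * ∫⁻ x, G x ≤ ∫⁻ x, H x := by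
  have hmeas : ∀ u : ℝ → ℝ≥0∞, Measurable fun t : ℝ => volume {x | ENNReal.ofReal t < u x} :=
    fun u => Antitone.measurable fun s t hst => measure_mono fun x hx =>
      (ENNReal.ofReal_le_ofReal hst).trans_lt hx
  have hlayer : ∀ u : ℝ → ℝ≥0∞, Measurable u → (∀ x, u x ≤ 1) →
      ∫⁻ x, u x = ∫⁻ t in Set.Ioo (0 : ℝ) 1, volume {x | ENNReal.ofReal t < u x} :=
    fun u hu => lintegral_eq_setLIntegral_meas_lt_of_le_one volume hu.aemeasurable
  calc ENNReal.ofReal a * (∫⁻ x, F x) + ENNReal.ofReal b * ∫⁻ x, G x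
      = ∫⁻ t in Set.Ioo (0 : ℝ) 1, ENNReal.ofReal a * volume {x | ENNReal.ofReal t < F x}
          + ENNReal.ofReal b * volume {x | ENNReal.ofReal t < G x} := by
        rw [hlayer F hF fun x => hF1 ▸ le_iSup F x, hlayer G hG fun x => hG1 ▸ le_iSup G x,
          lintegral_add_left ((hmeas F).const_mul _), lintegral_const_mul _ (hmeas F),
          lintegral_const_mul _ (hmeas G)]
    _ ≤ ∫⁻ t in Set.Ioo (0 : ℝ) 1, volume {x | ENNReal.ofReal t < min (H x) 1} := by
        refine setLIntegral_mono (hmeas _) fun t ht => ?_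
        have ht1 : ENNReal.ofReal t < 1 := by simpa using ht.2
        simp only [lt_min_iff, ht1, and_true]
        exact ofReal_mul_volume_superlevel_add_le ha hb hab hF hG h (by simpa using ht.1)
          ENNReal.ofReal_ne_top (lt_iSup_iff.1 (hF1 ▸ ht1)) (lt_iSup_iff.1 (hG1 ▸ ht1))
    _ = ∫⁻ x, min (H x) 1 := (hlayer _ (hH.min measurable_const) fun x => min_le_right _ _).symm
    _ ≤ ∫⁻ x, H x := lintegral_mono fun x => min_le_left _ _

theorem ennreal_geom_mean_le_arith_mean {a b : ℝ} (ha : 0 < a) (hb : 0 < b) (hab : a + b = 1)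
    (u v : ℝ≥0∞) : u ^ a * v ^ b ≤ ENNReal.ofReal a * u + ENNReal.ofReal b * v := by
  have hpq : (a⁻¹).HolderConjugate b⁻¹ :=
    Real.holderConjugate_iff.2 ⟨(one_lt_inv₀ ha).2 (by linarith), by simpa using hab⟩
  refine (ENNReal.young_inequality (u ^ a) (v ^ b) hpq).trans_eq ?_
  rw [← ENNReal.rpow_mul, ← ENNReal.rpow_mul, mul_inv_cancel₀ ha.ne', mul_inv_cancel₀ hb.ne',
    ENNReal.rpow_one, ENNReal.rpow_one, ENNReal.ofReal_inv_of_pos ha,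
    ENNReal.ofReal_inv_of_pos hb, div_eq_mul_inv, div_eq_mul_inv, inv_inv, inv_inv,
    mul_comm u, mul_comm v]

theorem exists_measurable_ge_lintegral_eq {α : Type*} [MeasurableSpace α] {μ : Measure α}
    {f : α → ℝ≥0∞} (hf : AEMeasurable f μ) :
    ∃ g, Measurable g ∧ f ≤ g ∧ ∫⁻ x, g x ∂μ = ∫⁻ x, f x ∂μ := by
  classical
  set N := toMeasurable μ {x | f x ≠ hf.mk f x}
  have hN : ∀ x ∉ N, f x = hf.mk f x := fun x hx => by
    by_contra hne
    exact hx (subset_toMeasurable _ _ hne)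
  have hN0 : μ N = 0 := (measure_toMeasurable _).trans (ae_iff.1 hf.ae_eq_mk)
  refine ⟨N.piecewise (fun _ => ∞) (hf.mk f), Measurable.piecewise (measurableSet_toMeasurable _ _)
    measurable_const hf.measurable_mk, fun x => ?_, lintegral_congr_ae ?_⟩
  · by_cases hx : x ∈ N
    · simp [hx]
    · simp [hx, hN x hx]
  · filter_upwards [measure_eq_zero_iff_ae_notMem.1 hN0] with x hx
    simp [hx, hN x hx]

section PrekopaLeindler

variable {E : Type*} [MeasurableSpace E] [AddCommMonoid E] [Module ℝ E]

/-- `μ` satisfies the Prékopa–Leindler inequality up to the factor `C`. The case `C = 1` of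
Lebesgue measure is the Prékopa–Leindler inequality itself; the factor measures how far `μ` is from
being log-concave. Only `H` is required to be measurable, so that the inequality can be applied to
all `F` and `G`. -/
def IsPrekopaLeindler (μ : Measure E) (C : ℝ≥0) : Prop :=
  ∀ ⦃a b : ℝ⦄, 0 < a → 0 < b → a + b = 1 → ∀ ⦃F G H : E → ℝ≥0∞⦄, AEMeasurable H μ →
    (∀ x y, F x ^ a * G y ^ b ≤ H (a • x + b • y)) →
      (∫⁻ x, F x ∂μ) ^ a * (∫⁻ x, G x ∂μ) ^ b ≤ C * ∫⁻ x, H x ∂μ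

namespace IsPrekopaLeindler

variable {μ : Measure E} {C : ℝ≥0}

theorem of_measurable
    (h : ∀ ⦃a b : ℝ⦄, 0 < a → 0 < b → a + b = 1 → ∀ ⦃F G H : E → ℝ≥0∞⦄, Measurable F →
      Measurable G → Measurable H → (∀ x y, F x ^ a * G y ^ b ≤ H (a • x + b • y)) →
        (∫⁻ x, F x ∂μ) ^ a * (∫⁻ x, G x ∂μ) ^ b ≤ C * ∫⁻ x, H x ∂μ) :
    IsPrekopaLeindler μ C := by
  intro a b ha hb hab F G H hH hFGH
  obtain ⟨F', hF', hFF', hFi⟩ := exists_measurable_le_lintegral_eq μ F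
  obtain ⟨G', hG', hGG', hGi⟩ := exists_measurable_le_lintegral_eq μ G
  obtain ⟨H', hH', hHH', hHi⟩ := exists_measurable_ge_lintegral_eq hH
  rw [hFi, hGi, ← hHi]
  refine h ha hb hab hF' hG' hH' fun x y => (mul_le_mul' ?_ ?_).trans ((hFGH x y).trans (hHH' _))
  · exact ENNReal.rpow_le_rpow (hFF' x) ha.le
  · exact ENNReal.rpow_le_rpow (hGG' y) hb.le

end IsPrekopaLeindler

end PrekopaLeindler

theorem rpow_lintegral_mul_rpow_lintegral_le_of_bounded {a b : ℝ} (ha : 0 < a) (hb : 0 < b)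
    (hab : a + b = 1) {F G H : ℝ → ℝ≥0∞} (hF : Measurable F) (hG : Measurable G)
    (hH : Measurable H) (hFt : ⨆ x, F x ≠ ∞) (hGt : ⨆ x, G x ≠ ∞)
    (h : ∀ x y, F x ^ a * G y ^ b ≤ H (a • x + b • y)) :
    (∫⁻ x, F x) ^ a * (∫⁻ x, G x) ^ b ≤ ∫⁻ x, H x := by
  set A := ⨆ x, F x with hA
  set B := ⨆ x, G x with hB
  by_cases hA0 : A = 0
  · have : ∀ x, F x = 0 := by simpa [hA] using hA0
    simp [this, ha]
  by_cases hB0 : B = 0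
  · have : ∀ x, G x = 0 := by simpa [hB] using hB0
    simp [this, hb]
  have hnormalize : ∀ {c : ℝ≥0∞} {u : ℝ → ℝ≥0∞}, Measurable u → c ≠ 0 → c ≠ ∞ →
      ∫⁻ x, u x = c * ∫⁻ x, u x / c := fun hu hc0 hct => by
    rw [← lintegral_const_mul _ (by fun_prop)]
    simp_rw [ENNReal.mul_div_cancel hc0 hct]
  have hAa0 : A ^ a ≠ 0 := by simp [hA0, hFt]
  have hBb0 : B ^ b ≠ 0 := by simp [hB0, hGt]
  have hAat : A ^ a ≠ ∞ := ENNReal.rpow_ne_top_of_nonneg ha.le hFt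
  have hBbt : B ^ b ≠ ∞ := ENNReal.rpow_ne_top_of_nonneg hb.le hGt
  rw [hnormalize hF hA0 hFt, hnormalize hG hB0 hGt,
    hnormalize hH (mul_ne_zero hAa0 hBb0) (ENNReal.mul_ne_top hAat hBbt),
    ENNReal.mul_rpow_of_nonneg _ _ ha.le, ENNReal.mul_rpow_of_nonneg _ _ hb.le, mul_mul_mul_comm]
  gcongr
  refine (ennreal_geom_mean_le_arith_mean ha hb hab _ _).trans
    (ofReal_mul_lintegral_add_le_of_iSup_eq_one ha hb hab (hF.div_const A) (hG.div_const B)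
      (hH.div_const _) ?_ ?_ fun x y => ?_)
  · rw [← ENNReal.iSup_div, ENNReal.div_self hA0 hFt]
  · rw [← ENNReal.iSup_div, ENNReal.div_self hB0 hGt]
  · rw [ENNReal.div_rpow_of_nonneg _ _ ha.le, ENNReal.div_rpow_of_nonneg _ _ hb.le,
      div_eq_mul_inv, div_eq_mul_inv, mul_mul_mul_comm,
      ← ENNReal.mul_inv (.inl hAa0) (.inl hAat), ← div_eq_mul_inv]
    gcongr
    exact h x y

theorem lintegral_eq_iSup_lintegral_min_natCast {α : Type*} [MeasurableSpace α] {μ : Measure α}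
    {u : α → ℝ≥0∞} (hu : Measurable u) :
    ∫⁻ x, u x ∂μ = ⨆ k : ℕ, ∫⁻ x, min (u x) k ∂μ := by
  rw [← lintegral_iSup (fun k => hu.min measurable_const)
    (fun i j hij x => min_le_min_left _ (by exact_mod_cast hij))]
  congr with x
  rw [← inf_iSup_eq, ENNReal.iSup_natCast, inf_top_eq]

theorem isPrekopaLeindler_volume_real : IsPrekopaLeindler (volume : Measure ℝ) 1 := by
  refine .of_measurable fun a b ha hb hab F G H hF hG hH h => ?_
  have hbdd : ∀ (u : ℝ → ℝ≥0∞) (k : ℕ), ⨆ x, min (u x) k ≠ ∞ := fun u k =>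
    ne_top_of_le_ne_top (ENNReal.natCast_ne_top k) (iSup_le fun x => min_le_right _ _)
  have hrpow : ∀ {c : ℝ}, 0 < c → ∀ s : ℕ → ℝ≥0∞, (⨆ k, s k) ^ c = ⨆ k, s k ^ c :=
    fun hc s => (ENNReal.orderIsoRpow _ hc).map_iSup s
  rw [ENNReal.coe_one, one_mul, lintegral_eq_iSup_lintegral_min_natCast hF,
    lintegral_eq_iSup_lintegral_min_natCast hG, hrpow ha, hrpow hb, ENNReal.iSup_mul]
  refine iSup_le fun k => ?_
  rw [ENNReal.mul_iSup]
  refine iSup_le fun l => ?_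
  refine rpow_lintegral_mul_rpow_lintegral_le_of_bounded ha hb hab (hF.min measurable_const)
    (hG.min measurable_const) hH (hbdd F k) (hbdd G l) fun x y => (mul_le_mul' ?_ ?_).trans (h x y)
  · exact ENNReal.rpow_le_rpow (min_le_left _ _) ha.le
  · exact ENNReal.rpow_le_rpow (min_le_left _ _) hb.le

namespace IsPrekopaLeindler

variable {E F : Type*} [MeasurableSpace E] [AddCommMonoid E] [Module ℝ E] [MeasurableSpace F]
  [AddCommMonoid F] [Module ℝ F] {μ : Measure E} {ν : Measure F} {C D : ℝ≥0}

theorem one_le [IsProbabilityMeasure μ] (hμ : IsPrekopaLeindler μ C) : 1 ≤ C := by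
  simpa using hμ (a := 1 / 2) (b := 1 / 2) (by norm_num) (by norm_num) (by norm_num)
    (F := fun _ => 1) (G := fun _ => 1) (H := fun _ => 1) aemeasurable_const (by simp)

theorem of_subsingleton [Subsingleton E] (μ : Measure E) : IsPrekopaLeindler μ 1 := by
  intro a b ha hb hab F G H _ h
  have hconst : ∀ u : E → ℝ≥0∞, ∫⁻ x, u x ∂μ = u 0 * μ Set.univ := fun u => by
    rw [← lintegral_const]
    exact lintegral_congr fun x => congrArg u (Subsingleton.elim x 0)
  calc (∫⁻ x, F x ∂μ) ^ a * (∫⁻ x, G x ∂μ) ^ b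
      = F 0 ^ a * G 0 ^ b * (μ Set.univ ^ a * μ Set.univ ^ b) := by
        rw [hconst, hconst, ENNReal.mul_rpow_of_nonneg _ _ ha.le,
          ENNReal.mul_rpow_of_nonneg _ _ hb.le, mul_mul_mul_comm]
    _ ≤ H 0 * μ Set.univ := by
        rw [← ENNReal.rpow_add_of_nonneg _ _ ha.le hb.le, hab, ENNReal.rpow_one]
        gcongr
        simpa using h 0 0
    _ = (1 : ℝ≥0) * ∫⁻ x, H x ∂μ := by rw [hconst, ENNReal.coe_one, one_mul]

theorem prod [SFinite ν] (hμ : IsPrekopaLeindler μ C) (hν : IsPrekopaLeindler ν D) :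
    IsPrekopaLeindler (μ.prod ν) (C * D) := by
  refine .of_measurable fun a b ha hb hab f g h hf hg hh hfgh => ?_
  rw [lintegral_prod _ hf.aemeasurable, lintegral_prod _ hg.aemeasurable,
    lintegral_prod _ hh.aemeasurable, ENNReal.coe_mul, mul_assoc,
    ← lintegral_const_mul _ hh.lintegral_prod_right']
  exact hμ ha hb hab (hh.lintegral_prod_right'.const_mul _).aemeasurable fun x₁ x₂ =>
    hν ha hb hab (hh.comp measurable_prodMk_left).aemeasurable fun y₁ y₂ => hfgh (x₁, y₁) (x₂, y₂)

theorem map (hμ : IsPrekopaLeindler μ C) (L : E →ₗ[ℝ] F) (hL : Measurable L) :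
    IsPrekopaLeindler (μ.map L) C := by
  refine .of_measurable fun a b ha hb hab f g h hf hg hh hfgh => ?_
  rw [lintegral_map hf hL, lintegral_map hg hL, lintegral_map hh hL]
  exact hμ ha hb hab (hh.comp hL).aemeasurable fun x y => by
    simpa using hfgh (L x) (L y)

theorem withDensity (hμ : IsPrekopaLeindler μ C) {p : E → ℝ≥0∞} (hpm : AEMeasurable p μ)
    (hp : ∀ ⦃a b : ℝ⦄, 0 < a → 0 < b → a + b = 1 → ∀ x y,
      p x ^ a * p y ^ b ≤ D * p (a • x + b • y)) :
    IsPrekopaLeindler (μ.withDensity p) (C * D) := by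
  refine .of_measurable fun a b ha hb hab f g h hf hg hh hfgh => ?_
  simp only [lintegral_withDensity_eq_lintegral_mul₀ hpm, hf.aemeasurable, hg.aemeasurable,
    hh.aemeasurable]
  rw [ENNReal.coe_mul, mul_assoc, ← lintegral_const_mul' _ _ ENNReal.coe_ne_top]
  refine hμ ha hb hab ((hpm.mul hh.aemeasurable).const_mul _) fun x y => ?_
  calc (p x * f x) ^ a * (p y * g y) ^ b = p x ^ a * p y ^ b * (f x ^ a * g y ^ b) := by
        rw [ENNReal.mul_rpow_of_nonneg _ _ ha.le, ENNReal.mul_rpow_of_nonneg _ _ hb.le,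
          mul_mul_mul_comm]
    _ ≤ D * p (a • x + b • y) * h (a • x + b • y) := mul_le_mul' (hp ha hb hab x y) (hfgh x y)
    _ = D * (p (a • x + b • y) * h (a • x + b • y)) := mul_assoc _ _ _

end IsPrekopaLeindler

theorem isPrekopaLeindler_volume_pi (n : ℕ) :
    IsPrekopaLeindler (volume : Measure (Fin n → ℝ)) 1 := by
  induction n with
  | zero => exact .of_subsingleton _
  | succ n ih =>
    let e : (ℝ × (Fin n → ℝ)) ≃ₗ[ℝ] (Fin (n + 1) → ℝ) := Fin.consLinearEquiv ℝ fun _ => ℝ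
    have heq : ⇑(MeasurableEquiv.piFinSuccAbove (fun _ : Fin (n + 1) => ℝ) 0).symm = e :=
      congrArg (⇑) (Fin.insertNthEquiv_zero fun _ => ℝ)
    have he : MeasurePreserving e (volume.prod volume) volume :=
      heq ▸ (volume_preserving_piFinSuccAbove (fun _ : Fin (n + 1) => ℝ) 0).symm
    simpa [he.map_eq] using (isPrekopaLeindler_volume_real.prod ih).map e.toLinearMap he.measurable

theorem isPrekopaLeindler_volume (E : Type*) [NormedAddCommGroup E] [InnerProductSpace ℝ E]
    [FiniteDimensional ℝ E] [MeasurableSpace E] [BorelSpace E] :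
    IsPrekopaLeindler (volume : Measure E) 1 := by
  let b := stdOrthonormalBasis ℝ E
  let e : (Fin (Module.finrank ℝ E) → ℝ) ≃ₗ[ℝ] E :=
    (WithLp.linearEquiv 2 ℝ _).symm.trans b.repr.symm.toLinearEquiv
  have he : MeasurePreserving e volume volume :=
    b.measurePreserving_repr_symm.comp (PiLp.volume_preserving_toLp _)
  simpa [he.map_eq] using (isPrekopaLeindler_volume_pi _).map e.toLinearMap he.measurable

theorem ApproxLogConcave.rpow_mul_rpow_le {E : Type*} [AddCommMonoid E] [SMul ℝ E] {ε : ℝ}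
    {p : E → ℝ} (hε : 0 < ε) (hp : ApproxLogConcave ε p) {a b : ℝ} (ha : 0 ≤ a) (hb : 0 ≤ b)
    (hab : a + b = 1) (x y : E) : p x ^ a * p y ^ b ≤ (ε⁻¹) ^ 2 * p (a • x + b • y) := by
  obtain ⟨g, ⟨hg0, hg⟩, hpg⟩ := hp
  have hp0 : ∀ x, 0 ≤ p x := fun x => (mul_nonneg hε.le (hg0 x)).trans (hpg x).1
  have hple : ∀ x, p x ≤ ε⁻¹ * g x := fun x => by simpa using (hpg x).2
  calc p x ^ a * p y ^ b ≤ (ε⁻¹ * g x) ^ a * (ε⁻¹ * g y) ^ b := by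
        refine mul_le_mul (Real.rpow_le_rpow (hp0 x) (hple x) ha)
          (Real.rpow_le_rpow (hp0 y) (hple y) hb) (Real.rpow_nonneg (hp0 y) b)
          (Real.rpow_nonneg ((hp0 x).trans (hple x)) a)
    _ = (ε⁻¹) ^ (a + b) * (g x ^ a * g y ^ b) := by
        rw [Real.mul_rpow (by positivity) (hg0 x), Real.mul_rpow (by positivity) (hg0 y),
          Real.rpow_add (by positivity)]
        ring
    _ ≤ ε⁻¹ * g (a • x + b • y) := by
        rw [hab, Real.rpow_one]
        gcongr
        exact hg x y a b ha hb hab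
    _ ≤ ε⁻¹ * (ε⁻¹ * p (a • x + b • y)) := by
        gcongr
        exact (le_inv_mul_iff₀ hε).2 (hpg _).1
    _ = (ε⁻¹) ^ 2 * p (a • x + b • y) := by ring

/-! ### Reverse Hölder inequality for affine maps -/

theorem one_half_le_measure_le_two_mul_lintegral {α : Type*} [MeasurableSpace α] {μ : Measure α}
    [IsProbabilityMeasure μ] {φ : α → ℝ≥0∞} (hφ : AEMeasurable φ μ) (h0 : ∫⁻ x, φ x ∂μ ≠ 0)
    (htop : ∫⁻ x, φ x ∂μ ≠ ∞) : 1 / 2 ≤ μ {x | φ x ≤ 2 * ∫⁻ x, φ x ∂μ} := by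
  set m := ∫⁻ x, φ x ∂μ
  have hmarkov : μ {x | 2 * m < φ x} ≤ 1 / 2 :=
    calc μ {x | 2 * m < φ x} ≤ μ {x | 2 * m ≤ φ x} :=
          measure_mono fun x (hx : 2 * m < φ x) => hx.le
      _ ≤ m / (2 * m) :=
          meas_ge_le_lintegral_div hφ (mul_ne_zero two_ne_zero h0)
            (ENNReal.mul_ne_top ENNReal.ofNat_ne_top htop)
      _ = 1 / 2 := by
          simpa using ENNReal.mul_div_mul_right 1 2 h0 htop
  have hcover : {x | φ x ≤ 2 * m} ∪ {x | 2 * m < φ x} = Set.univ :=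
    Set.eq_univ_of_forall fun x => le_or_gt (φ x) (2 * m)
  have hone : 1 ≤ μ {x | φ x ≤ 2 * m} + 1 / 2 :=
    calc 1 = μ ({x | φ x ≤ 2 * m} ∪ {x | 2 * m < φ x}) := by rw [hcover, measure_univ]
      _ ≤ μ {x | φ x ≤ 2 * m} + μ {x | 2 * m < φ x} := measure_union_le _ _
      _ ≤ μ {x | φ x ≤ 2 * m} + 1 / 2 := by gcongr
  calc (1 : ℝ≥0∞) / 2 = 1 - 1 / 2 := by rw [one_div, ENNReal.one_sub_inv_two]
    _ ≤ μ {x | φ x ≤ 2 * m} := tsub_le_iff_right.2 hone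

theorem enorm_affineMap_le {E F : Type*} [AddCommGroup E] [Module ℝ E] [NormedAddCommGroup F]
    [NormedSpace ℝ F] (g : E →ᵃ[ℝ] F) {r : ℝ≥0} (hr : 1 ≤ r) (x y : E) :
    ‖g x‖ₑ ≤ r * ‖g ((r : ℝ)⁻¹ • x + (1 - (r : ℝ)⁻¹) • y)‖ₑ + r * ‖g y‖ₑ := by
  have hr0 : (r : ℝ) ≠ 0 := (NNReal.coe_pos.2 (one_pos.trans_le hr)).ne'
  set z := (r : ℝ)⁻¹ • x + (1 - (r : ℝ)⁻¹) • y
  have hx : g x = (r : ℝ) • g z - ((r - 1 : ℝ≥0) : ℝ) • g y := by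
    rw [Convex.combo_affine_apply (by ring), smul_add, smul_smul, smul_smul, mul_inv_cancel₀ hr0,
      one_smul, mul_sub, mul_inv_cancel₀ hr0, mul_one, NNReal.coe_sub hr, NNReal.coe_one,
      add_sub_cancel_right]
  calc ‖g x‖ₑ ≤ ‖(r : ℝ) • g z‖ₑ + ‖((r - 1 : ℝ≥0) : ℝ) • g y‖ₑ := hx ▸ enorm_sub_le
    _ = r * ‖g z‖ₑ + (r - 1 : ℝ≥0) * ‖g y‖ₑ := by
        simp only [enorm_smul, Real.enorm_of_nonneg (NNReal.coe_nonneg _),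
          ENNReal.ofReal_coe_nnreal]
    _ ≤ r * ‖g z‖ₑ + r * ‖g y‖ₑ := by
        gcongr
        exact tsub_le_self

namespace IsPrekopaLeindler

section

variable {E F : Type*} [MeasurableSpace E] [AddCommGroup E] [Module ℝ E]
  [NormedAddCommGroup F] [NormedSpace ℝ F] {μ : Measure E} [IsProbabilityMeasure μ] {C : ℝ≥0}
  {g : E →ᵃ[ℝ] F} {r : ℝ≥0}

theorem eLpNorm_affineMap_le_of_forall_mem_enorm_le (hμ : IsPrekopaLeindler μ C)
    (hg : AEStronglyMeasurable g μ) (hr : 1 < r) {S : Set E} (hSm : NullMeasurableSet S μ)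
    (hS : 1 / 2 ≤ μ S) {B : ℝ≥0∞} (hB : ∀ y ∈ S, ‖g y‖ₑ ≤ B) :
    eLpNorm g r μ ≤ 2 * C * r * (eLpNorm g 1 μ + B) := by
  have hr1 : (1 : ℝ) < r := hr
  set a : ℝ := (r : ℝ)⁻¹ with ha_def
  have ha : 0 < a := by positivity
  have hb : 0 < 1 - a := sub_pos.2 (inv_lt_one_of_one_lt₀ hr1)
  -- `x ↦ g x` is recovered from `g (x / r + (1 - 1 / r) y)` and `g y`, which turns the
  -- Prékopa–Leindler inequality for `‖g‖ ^ r` and `𝟙_S` into a bound by the first moment.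
  have hFGH : ∀ x y, (‖g x‖ₑ ^ (r : ℝ)) ^ a * S.indicator 1 y ^ (1 - a)
      ≤ r * ‖g (a • x + (1 - a) • y)‖ₑ + r * B := by
    intro x y
    by_cases hy : y ∈ S
    · rw [← ENNReal.rpow_mul, ha_def, mul_inv_cancel₀ (by positivity), ENNReal.rpow_one,
        Set.indicator_of_mem hy, Pi.one_apply, ENNReal.one_rpow, mul_one]
      exact (enorm_affineMap_le g hr.le x y).trans (by gcongr; exact hB y hy)
    · simp [hy, hb]
  have hG : (1 : ℝ≥0∞) / 2 ≤ (∫⁻ x, S.indicator 1 x ∂μ) ^ (1 - a) := by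
    rw [lintegral_indicator_one₀ hSm]
    calc (1 : ℝ≥0∞) / 2 ≤ μ S ^ (1 : ℝ) := by rwa [ENNReal.rpow_one]
      _ ≤ μ S ^ (1 - a) :=
          ENNReal.rpow_le_rpow_of_exponent_ge prob_le_one (sub_le_self 1 ha.le)
  have hH : ∫⁻ x, (r * ‖g x‖ₑ + r * B) ∂μ = r * (eLpNorm g 1 μ + B) := by
    rw [lintegral_add_right _ measurable_const, lintegral_const_mul' _ _ ENNReal.coe_ne_top,
      ← eLpNorm_one_eq_lintegral_enorm, lintegral_const, measure_univ, mul_one, mul_add]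
  calc eLpNorm g r μ = 2 * ((∫⁻ x, ‖g x‖ₑ ^ (r : ℝ) ∂μ) ^ a * (1 / 2)) := by
        rw [eLpNorm_nnreal_eq_lintegral (one_pos.trans hr).ne', mul_left_comm,
          ENNReal.mul_div_cancel two_ne_zero ENNReal.ofNat_ne_top, mul_one, one_div]
    _ ≤ 2 * ((∫⁻ x, ‖g x‖ₑ ^ (r : ℝ) ∂μ) ^ a * (∫⁻ x, S.indicator 1 x ∂μ) ^ (1 - a)) := by
        gcongr
    _ ≤ 2 * (C * ∫⁻ x, (r * ‖g x‖ₑ + r * B) ∂μ) := by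
        refine mul_le_mul_right (hμ ha hb (add_sub_cancel a 1) ?_ hFGH) 2
        exact (hg.enorm.const_mul _).add aemeasurable_const
    _ = 2 * C * r * (eLpNorm g 1 μ + B) := by rw [hH]; ring

theorem eLpNorm_affineMap_le (hμ : IsPrekopaLeindler μ C) (hg : AEStronglyMeasurable g μ)
    (hr : 1 < r) : eLpNorm g r μ ≤ 6 * C * r * eLpNorm g 1 μ := by
  set m := eLpNorm g 1 μ
  have hm : ∫⁻ x, ‖g x‖ₑ ∂μ = m := eLpNorm_one_eq_lintegral_enorm.symm
  rcases eq_or_ne m 0 with hm0 | hm0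
  · rw [eLpNorm_congr_ae ((eLpNorm_eq_zero_iff hg one_ne_zero).1 hm0)]
    simp
  rcases eq_or_ne m ∞ with hmtop | hmtop
  · have hC : (C : ℝ≥0∞) ≠ 0 := by simpa using (one_pos.trans_le hμ.one_le).ne'
    simp [hmtop, ENNReal.mul_top, hC, (one_pos.trans hr).ne']
  have hS : 1 / 2 ≤ μ {x | ‖g x‖ₑ ≤ 2 * m} := by
    simpa only [hm] using one_half_le_measure_le_two_mul_lintegral hg.enorm (hm ▸ hm0) (hm ▸ hmtop)
  calc eLpNorm g r μ ≤ 2 * C * r * (m + 2 * m) :=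
        hμ.eLpNorm_affineMap_le_of_forall_mem_enorm_le hg hr
          (nullMeasurableSet_le hg.enorm aemeasurable_const) hS fun _ hy => hy
    _ = 6 * C * r * m := by ring

end

theorem sqrt_variance_le_mul_integral_abs_sub {E : Type*} [MeasurableSpace E] [NormedAddCommGroup E]
    [NormedSpace ℝ E] {μ : Measure E} {C : ℝ≥0} [IsProbabilityMeasure μ]
    (hμ : IsPrekopaLeindler μ C) {l : StrongDual ℝ E} (hl : Integrable l μ) :
    √Var[l; μ] ≤ 12 * C * ∫ x, |l x - μ[l]| ∂μ := by
  let g : E →ᵃ[ℝ] ℝ := (l : E →ₗ[ℝ] ℝ).toAffineMap - AffineMap.const ℝ E (μ[l])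
  have hgi : Integrable g μ := hl.sub (integrable_const _)
  have hvar : √Var[l; μ] = (eLpNorm g (2 : ℝ≥0) μ).toReal := by
    rw [eLpNorm_nnreal_eq_lintegral two_ne_zero, ← ENNReal.toReal_rpow, Real.sqrt_eq_rpow]
    simp [variance, evariance, g]
  have hmean : ∫ x, |l x - μ[l]| ∂μ = (eLpNorm g 1 μ).toReal := by
    rw [eLpNorm_one_eq_lintegral_enorm, ← integral_norm_eq_lintegral_enorm hgi.1]
    simp [g]
  have hle := hμ.eLpNorm_affineMap_le hgi.1 one_lt_two
  rw [hvar, hmean]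
  refine (ENNReal.toReal_mono ?_ hle).trans_eq ?_
  · exact ENNReal.mul_ne_top (by finiteness) (memLp_one_iff_integrable.2 hgi).2.ne
  · simp only [ENNReal.toReal_mul, ENNReal.coe_toReal, ENNReal.toReal_ofNat, NNReal.coe_ofNat]
    ring

end IsPrekopaLeindler

/-! ### Convex domination on the zonoid -/

theorem integrable_lipschitzWith_comp {α E : Type*} [MeasurableSpace α]
    [NormedAddCommGroup E] {μ : Measure α} [IsFiniteMeasure μ] {L : ℝ≥0} {h : E → ℝ}
    (hh : LipschitzWith L h) {g : α → E} (hg : Integrable g μ) :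
    Integrable (fun x => h (g x)) μ := by
  refine ((integrable_const |h 0|).add (hg.norm.const_mul (L : ℝ))).mono'
    (hh.continuous.comp_aestronglyMeasurable hg.1) (.of_forall fun x => ?_)
  have hdist : |h (g x) - h 0| ≤ L * ‖g x‖ := by
    simpa [Real.dist_eq] using hh.dist_le_mul (g x) 0
  calc ‖h (g x)‖ = |h 0 + (h (g x) - h 0)| := by rw [add_sub_cancel, Real.norm_eq_abs]
    _ ≤ |h 0| + L * ‖g x‖ := (abs_add_le _ _).trans (by gcongr)

theorem integral_abs_le_two_mul_integral_abs_add {α : Type*} [MeasurableSpace α] {μ : Measure α}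
    [IsProbabilityMeasure μ] {Y : α → ℝ} (hY : Integrable Y μ) (hY0 : μ[Y] = 0) (s : ℝ) :
    ∫ x, |Y x| ∂μ ≤ 2 * ∫ x, |Y x + s| ∂μ := by
  have hYs : Integrable (fun x => Y x + s) μ := hY.add (integrable_const s)
  have hs : |s| ≤ ∫ x, |Y x + s| ∂μ :=
    calc |s| = |∫ x, (Y x + s) ∂μ| := by simp [integral_add hY (integrable_const s), hY0]
      _ ≤ ∫ x, |Y x + s| ∂μ := abs_integral_le_integral_abs
  calc ∫ x, |Y x| ∂μ ≤ ∫ x, (|Y x + s| + |s|) ∂μ :=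
        integral_mono hY.abs (hYs.abs.add (integrable_const _)) fun x => by
          simpa using abs_sub (Y x + s) s
    _ = (∫ x, |Y x + s| ∂μ) + |s| := by simp [integral_add hYs.abs (integrable_const _)]
    _ ≤ 2 * ∫ x, |Y x + s| ∂μ := by linarith

/-- The zonoid of the centred law `ν`: the convex set with support function
`l ↦ 𝔼[(l (X - 𝔼 X))₊] = 𝔼[|l (X - 𝔼 X)|] / 2`. It consists of the shifts `v` for which the
two-point law on `𝔼 X ± v` is dominated by `ν` on convex functions. -/
def zonoid {E : Type*} [NormedAddCommGroup E] [NormedSpace ℝ E] [MeasurableSpace E]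
    (ν : Measure E) : Set E :=
  {v | ∀ l : StrongDual ℝ E, 2 * l v ≤ ∫ x, |l x - ν[l]| ∂ν}

section Zonoid

variable {E : Type*} [NormedAddCommGroup E] [NormedSpace ℝ E] [MeasurableSpace E]
  {ν : Measure E} {v : E} {h : E → ℝ} {L : ℝ≥0}

theorem zero_mem_zonoid : (0 : E) ∈ zonoid ν := fun l => by
  simpa using integral_nonneg fun x => abs_nonneg (l x - ν[l])

theorem isClosed_zonoid : IsClosed (zonoid ν) := by
  simp only [zonoid, Set.ofPred_forall]
  exact isClosed_iInter fun l =>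
    isClosed_le (continuous_const.mul l.continuous) continuous_const

variable [CompleteSpace E] [IsProbabilityMeasure ν]

theorem average_le_integral_max_of_mem_zonoid (hν : Integrable id ν) (hv : v ∈ zonoid ν)
    (l₁ l₂ : StrongDual ℝ E) (c₁ c₂ : ℝ) :
    (l₁ (ν[id] + v) + c₁ + (l₂ (ν[id] - v) + c₂)) / 2
      ≤ ∫ x, max (l₁ x + c₁) (l₂ x + c₂) ∂ν := by
  have hint : ∀ l : StrongDual ℝ E, Integrable l ν := fun l => l.integrable_comp hν
  have hmean : ∀ l : StrongDual ℝ E, ν[l] = l ν[id] := fun l => l.integral_comp_comm hν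
  have hw : Integrable (fun x => (l₁ - l₂) x - ν[l₁ - l₂]) ν :=
    (hint (l₁ - l₂)).sub (integrable_const _)
  have hw0 : ∫ x, ((l₁ - l₂) x - ν[l₁ - l₂]) ∂ν = 0 := by
    rw [integral_sub (hint (l₁ - l₂)) (integrable_const _), integral_const, probReal_univ,
      one_smul, sub_self]
  set s : ℝ := ν[l₁ - l₂] + (c₁ - c₂)
  set d : E → ℝ := fun x => (l₁ - l₂) x - ν[l₁ - l₂]
  have hmax : ∀ x, max (l₁ x + c₁) (l₂ x + c₂)
      = 2⁻¹ * ((l₁ + l₂) x + (c₁ + c₂) + |d x + s|) := fun x => by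
    have hds : d x + s = l₁ x + c₁ - (l₂ x + c₂) := by
      simp only [d, s, sub_apply]
      ring
    rw [max_comm, sup_eq_half_smul_add_add_abs_sub' ℝ, hds, add_apply, smul_eq_mul]
    ring
  have hlower : (l₁ - l₂) v ≤ ∫ x, |d x + s| ∂ν := by
    linarith [hv (l₁ - l₂), integral_abs_le_two_mul_integral_abs_add hw hw0 s]
  calc (l₁ (ν[id] + v) + c₁ + (l₂ (ν[id] - v) + c₂)) / 2
      = 2⁻¹ * (ν[l₁ + l₂] + (c₁ + c₂) + (l₁ - l₂) v) := by
        rw [hmean]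
        simp only [map_add, map_sub, add_apply, sub_apply]
        ring
    _ ≤ 2⁻¹ * (ν[l₁ + l₂] + (c₁ + c₂) + ∫ x, |d x + s| ∂ν) := by gcongr
    _ = ∫ x, max (l₁ x + c₁) (l₂ x + c₂) ∂ν := by
        simp_rw [hmax]
        have hsum : Integrable (fun x => (l₁ + l₂) x + (c₁ + c₂)) ν :=
          (hint (l₁ + l₂)).add (integrable_const _)
        have habs : Integrable (fun x => |d x + s|) ν := (hw.add (integrable_const s)).abs
        rw [integral_const_mul, integral_add hsum habs,
          integral_add (hint (l₁ + l₂)) (integrable_const _)]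
        simp

theorem average_le_integral_of_mem_zonoid (hν : Integrable id ν)
    (hconv : ConvexOn ℝ Set.univ h) (hcont : Continuous h) (hint : Integrable h ν)
    (hv : v ∈ zonoid ν) : (h (ν[id] + v) + h (ν[id] - v)) / 2 ≤ ∫ x, h x ∂ν := by
  refine le_of_forall_pos_sub_le fun η hη => ?_
  have hminorant : ∀ y, ∃ (l : StrongDual ℝ E) (c : ℝ),
      (∀ x, l x + c ≤ h x) ∧ h y - η = l y + c := fun y => by
    obtain ⟨l, c, hle, heq⟩ := hconv.exists_affine_le_of_lt (𝕜 := ℝ) (x := y) (a := h y - η)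
      (Set.mem_univ y) (by linarith) isClosed_univ hcont.continuousOn.lowerSemicontinuousOn
    exact ⟨l, c, fun x => hle ⟨x, Set.mem_univ x⟩, heq.symm⟩
  obtain ⟨l₁, c₁, hle₁, heq₁⟩ := hminorant (ν[id] + v)
  obtain ⟨l₂, c₂, hle₂, heq₂⟩ := hminorant (ν[id] - v)
  have haff : ∀ (l : StrongDual ℝ E) (c : ℝ), Integrable (fun x => l x + c) ν := fun l c =>
    (l.integrable_comp hν).add (integrable_const c)
  calc (h (ν[id] + v) + h (ν[id] - v)) / 2 - η
      = (l₁ (ν[id] + v) + c₁ + (l₂ (ν[id] - v) + c₂)) / 2 := by rw [← heq₁, ← heq₂]; ring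
    _ ≤ ∫ x, max (l₁ x + c₁) (l₂ x + c₂) ∂ν :=
        average_le_integral_max_of_mem_zonoid hν hv l₁ l₂ c₁ c₂
    _ ≤ ∫ x, h x ∂ν :=
        integral_mono ((haff l₁ c₁).sup (haff l₂ c₂)) hint fun x => max_le (hle₁ x) (hle₂ x)

theorem average_le_integral_add_indicator (hν : Integrable id ν) (hconv : ConvexOn ℝ Set.univ h)
    (hLip : LipschitzWith L h) (v : E) :
    (h (ν[id] + v) + h (ν[id] - v)) / 2
      ≤ (∫ x, h x ∂ν) + L * (zonoid ν)ᶜ.indicator (‖·‖) v := by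
  have hint : Integrable h ν := integrable_lipschitzWith_comp hLip hν
  by_cases hv : v ∈ zonoid ν
  · simpa [hv] using average_le_integral_of_mem_zonoid hν hconv hLip.continuous hint hv
  · have hjensen : h ν[id] ≤ ∫ x, h x ∂ν := by
      simpa using average_le_integral_of_mem_zonoid hν hconv hLip.continuous hint zero_mem_zonoid
    have hadd : h (ν[id] + v) ≤ h ν[id] + L * ‖v‖ := by
      simpa [Real.dist_eq] using hLip.le_add_mul (ν[id] + v) ν[id]
    have hsub : h (ν[id] - v) ≤ h ν[id] + L * ‖v‖ := by
      simpa [Real.dist_eq] using hLip.le_add_mul (ν[id] - v) ν[id]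
    rw [Set.indicator_of_mem hv]
    linarith

theorem integral_comp_mean_add_le [BorelSpace E] {γ : Measure E} [IsProbabilityMeasure γ]
    [γ.IsNegInvariant] (hν : Integrable id ν) (hγ : Integrable id γ)
    (hconv : ConvexOn ℝ Set.univ h) (hLip : LipschitzWith L h) :
    ∫ v, h (ν[id] + v) ∂γ ≤ (∫ x, h x ∂ν) + L * ∫ v in (zonoid ν)ᶜ, ‖v‖ ∂γ := by
  set m := ν[id]
  have hadd : Integrable (fun v => h (m + v)) γ :=
    integrable_lipschitzWith_comp hLip ((integrable_const m).add hγ)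
  have hsub : Integrable (fun v => h (m - v)) γ :=
    integrable_lipschitzWith_comp hLip ((integrable_const m).sub hγ)
  have hsymm : ∫ v, h (m - v) ∂γ = ∫ v, h (m + v) ∂γ := by
    simpa [sub_eq_add_neg] using integral_neg_eq_self (fun v => h (m + v)) γ
  have htail : Integrable ((zonoid ν)ᶜ.indicator (‖·‖)) γ :=
    hγ.norm.indicator isClosed_zonoid.measurableSet.compl
  calc ∫ v, h (m + v) ∂γ = ∫ v, (h (m + v) + h (m - v)) / 2 ∂γ := by
        rw [integral_div, integral_add hadd hsub, hsymm, add_self_div_two]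
    _ ≤ ∫ v, ((∫ x, h x ∂ν) + L * (zonoid ν)ᶜ.indicator (‖·‖) v) ∂γ :=
        integral_mono ((hadd.add hsub).div_const 2) ((integrable_const _).add (htail.const_mul _))
          fun v => average_le_integral_add_indicator hν hconv hLip v
    _ = (∫ x, h x ∂ν) + L * ∫ v in (zonoid ν)ᶜ, ‖v‖ ∂γ := by
        rw [integral_add (integrable_const _) (htail.const_mul _), integral_const_mul,
          integral_indicator isClosed_zonoid.measurableSet.compl]
        simp

end Zonoid

theorem integral_comp_mean_add_le_interpolation {E : Type*} [NormedAddCommGroup E]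
    [NormedSpace ℝ E] [CompleteSpace E] [SecondCountableTopology E] [MeasurableSpace E]
    [BorelSpace E] {ν γ σ : Measure E} [IsProbabilityMeasure ν] [IsProbabilityMeasure γ]
    [IsProbabilityMeasure σ] [σ.IsNegInvariant] {f : E → ℝ} {L b : ℝ≥0} {a : ℝ}
    (hν : Integrable id ν) (hγ : Integrable id γ) (hσ : Integrable id σ)
    (hconv : ConvexOn ℝ Set.univ f) (hLip : LipschitzWith L f) (hab : a + (b : ℝ) = 1)
    (hlaw : (γ.prod σ).map (fun q => a • q.1 + (b : ℝ) • q.2) = γ) :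
    ∫ v, f (ν[id] + v) ∂γ ≤ (∫ v, ∫ x, f (a • (ν[id] + v) + (b : ℝ) • x) ∂ν ∂γ)
      + L * b * ∫ w in (zonoid ν)ᶜ, ‖w‖ ∂σ := by
  set m := ν[id]
  have hcombo : ∀ v w, m + (a • v + (b : ℝ) • w) = a • (m + v) + (b : ℝ) • (m + w) := fun v w => by
    rw [smul_add, smul_add, add_add_add_comm, ← add_smul, hab, one_smul]
  have hσint : Integrable (fun q : E × E => f (a • (m + q.1) + (b : ℝ) • (m + q.2))) (γ.prod σ) :=
    integrable_lipschitzWith_comp hLip ((((integrable_const m).add (hγ.comp_fst σ)).smul a).add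
      (((integrable_const m).add (hσ.comp_snd γ)).smul (b : ℝ)))
  have hνint : Integrable (fun q : E × E => f (a • (m + q.1) + (b : ℝ) • q.2)) (γ.prod ν) :=
    integrable_lipschitzWith_comp hLip
      ((((integrable_const m).add (hγ.comp_fst ν)).smul a).add ((hν.comp_snd γ).smul (b : ℝ)))
  calc ∫ v, f (m + v) ∂γ = ∫ q, f (m + (a • q.1 + (b : ℝ) • q.2)) ∂γ.prod σ := by
        conv_lhs => rw [← hlaw]
        exact integral_map (by fun_prop)
          (hLip.continuous.comp (continuous_const_add m)).aestronglyMeasurable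
    _ = ∫ v, ∫ w, f (a • (m + v) + (b : ℝ) • (m + w)) ∂σ ∂γ := by
        simp_rw [hcombo]
        exact integral_prod _ hσint
    _ ≤ ∫ v, ((∫ x, f (a • (m + v) + (b : ℝ) • x) ∂ν) + L * b * ∫ w in (zonoid ν)ᶜ, ‖w‖ ∂σ) ∂γ := by
        refine integral_mono hσint.integral_prod_left
          (hνint.integral_prod_left.add (integrable_const _)) fun v => ?_
        have hhconv : ConvexOn ℝ Set.univ fun y => f (a • (m + v) + (b : ℝ) • y) :=
          (hconv.translate_right (a • (m + v))).comp_linearMap (LinearMap.lsmul ℝ E (b : ℝ))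
        have hhLip : LipschitzWith (L * b) fun y => f (a • (m + v) + (b : ℝ) • y) :=
          hLip.comp <| .of_dist_le_mul fun x y => by
            rw [dist_add_left, dist_smul₀, Real.norm_of_nonneg b.coe_nonneg]
        simpa only [NNReal.coe_mul] using integral_comp_mean_add_le hν hσ hhconv hhLip
    _ = _ := by
        rw [integral_add hνint.integral_prod_left (integrable_const _)]
        simp only [integral_const, probReal_univ, smul_eq_mul, one_mul]

section
open scoped MatrixOrder
variable {ι : Type*} [Fintype ι] [DecidableEq ι] {S S' : Matrix ι ι ℝ}

theorem map_smul_add_smul_prod_multivariateGaussian (hS : S.PosSemidef) (hS' : S'.PosSemidef)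
    (μ μ' : EuclideanSpace ℝ ι) (a b : ℝ) :
    ((multivariateGaussian μ S).prod (multivariateGaussian μ' S')).map
        (fun q => a • q.1 + b • q.2)
      = multivariateGaussian (a • μ + b • μ') (a ^ 2 • S + b ^ 2 • S') := by
  have hconv : ((multivariateGaussian μ S).prod (multivariateGaussian μ' S')).map
      (fun q => a • q.1 + b • q.2)
      = (multivariateGaussian μ S).map (a • ·) ∗ (multivariateGaussian μ' S').map (b • ·) := by
    rw [Measure.conv, Measure.map_prod_map _ _ (by fun_prop) (by fun_prop),
      Measure.map_map (by fun_prop) (by fun_prop)]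
    rfl
  have := Measure.isProbabilityMeasure_map (μ := multivariateGaussian μ S) (f := (a • ·))
    (by fun_prop)
  have := Measure.isProbabilityMeasure_map (μ := multivariateGaussian μ' S') (f := (b • ·))
    (by fun_prop)
  have hsum : (a ^ 2 • S + b ^ 2 • S').PosSemidef :=
    (hS.smul (sq_nonneg a)).add (hS'.smul (sq_nonneg b))
  rw [hconv]
  refine Measure.ext_of_charFun (funext fun t => ?_)
  rw [charFun_conv, charFun_map_smul, charFun_map_smul, charFun_multivariateGaussian hS,
    charFun_multivariateGaussian hS', charFun_multivariateGaussian hsum, ← Complex.exp_add]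
  congr 1
  simp only [WithLp.ofLp_smul, Matrix.add_mulVec, Matrix.smul_mulVec, Matrix.mulVec_smul,
    dotProduct_add, dotProduct_smul, smul_dotProduct, inner_add_right, inner_smul_left,
    inner_smul_right, smul_eq_mul]
  push_cast
  simp only [conj_trivial]
  ring

theorem isNegInvariant_multivariateGaussian_zero (hS : S.PosSemidef) :
    (multivariateGaussian 0 S).IsNegInvariant := by
  have : IsFiniteMeasure (multivariateGaussian 0 S).neg :=
    inferInstanceAs (IsFiniteMeasure ((multivariateGaussian 0 S).map Neg.neg))
  refine ⟨Measure.ext_of_charFun (funext fun t => ?_)⟩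
  have hneg : (multivariateGaussian 0 S).neg = (multivariateGaussian 0 S).map ((-1 : ℝ) • ·) := by
    simp only [neg_smul, one_smul]
    rfl
  rw [hneg, charFun_map_smul, charFun_multivariateGaussian hS, charFun_multivariateGaussian hS]
  simp [Matrix.mulVec_neg]
end

/-! ### Gaussian densities and tails -/

section StdGaussian

open Module (finrank)

variable {E : Type*} [NormedAddCommGroup E] [InnerProductSpace ℝ E]

/-- The density of the standard Gaussian measure `N(0, I)` of a Euclidean space. -/
def stdGaussPdf (z : E) : ℝ :=
  (2 * π) ^ (-(finrank ℝ E : ℝ) / 2) * Real.exp (-(1 / 2) * ‖z‖ ^ 2)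

theorem stdGaussPdf_nonneg (z : E) : 0 ≤ stdGaussPdf z := by
  unfold stdGaussPdf
  positivity

variable [MeasurableSpace E] [BorelSpace E]

theorem measurable_stdGaussPdf : Measurable (stdGaussPdf : E → ℝ) := by
  unfold stdGaussPdf
  fun_prop

variable [FiniteDimensional ℝ E]

theorem integrable_stdGaussPdf : Integrable (stdGaussPdf : E → ℝ) := by
  refine Integrable.const_mul (.of_integral_ne_zero ?_) _
  rw [GaussianFourier.integral_rexp_neg_mul_sq_norm (by norm_num)]
  positivity

theorem stdGaussian_eq_withDensity :
    stdGaussian E = volume.withDensity fun z => ENNReal.ofReal (stdGaussPdf z) := by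
  have : IsFiniteMeasure
      ((volume : Measure E).withDensity fun z => ENNReal.ofReal (stdGaussPdf z)) :=
    isFiniteMeasure_withDensity_ofReal integrable_stdGaussPdf.2
  refine Measure.ext_of_charFun (funext fun t => ?_)
  have hintegrand : ∀ z : E,
      (ENNReal.ofReal (stdGaussPdf z)).toReal • Complex.exp (↑(inner ℝ z t) * Complex.I)
        = (((2 * π) ^ (-(finrank ℝ E : ℝ) / 2) : ℝ) : ℂ) *
          Complex.exp (-(1 / 2) * (‖z‖ : ℂ) ^ 2 + Complex.I * ↑(inner ℝ t z)) := fun z => by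
    rw [ENNReal.toReal_ofReal (stdGaussPdf_nonneg z), stdGaussPdf, Complex.real_smul,
      Complex.exp_add, real_inner_comm]
    push_cast
    ring_nf
  have hnorm : (((2 * π) ^ (-(finrank ℝ E : ℝ) / 2) : ℝ) : ℂ)
      * (π / (1 / 2)) ^ ((finrank ℝ E : ℂ) / 2) = 1 := by
    have hcast : ((π : ℂ) / (1 / 2)) ^ ((finrank ℝ E : ℂ) / 2)
        = (((2 * π) ^ ((finrank ℝ E : ℝ) / 2) : ℝ) : ℂ) := by
      rw [Complex.ofReal_cpow (by positivity)]
      push_cast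
      congr 1
      ring
    rw [hcast, ← Complex.ofReal_mul, ← Real.rpow_add (by positivity), neg_div, neg_add_cancel,
      Real.rpow_zero, Complex.ofReal_one]
  rw [charFun_stdGaussian, charFun_apply, integral_withDensity_eq_integral_toReal_smul
    measurable_stdGaussPdf.ennreal_ofReal (by simp)]
  simp_rw [hintegrand]
  rw [integral_const_mul, GaussianFourier.integral_cexp_neg_mul_sq_norm_add (by norm_num),
    Complex.I_sq, ← mul_assoc, hnorm, one_mul]
  congr 1
  ring

theorem integral_stdGaussian (F : E → ℝ) :
    ∫ z, F z ∂stdGaussian E = ∫ z, stdGaussPdf z * F z := by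
  rw [stdGaussian_eq_withDensity, integral_withDensity_eq_integral_toReal_smul
    measurable_stdGaussPdf.ennreal_ofReal (by simp)]
  simp only [ENNReal.toReal_ofReal (stdGaussPdf_nonneg _), smul_eq_mul]

theorem integral_exp_sq_norm_div_four_stdGaussian :
    ∫ z, Real.exp (‖z‖ ^ 2 / 4) ∂stdGaussian E = 2 ^ ((finrank ℝ E : ℝ) / 2) := by
  have hintegrand : ∀ z : E, stdGaussPdf z * Real.exp (‖z‖ ^ 2 / 4)
      = (2 * π) ^ (-(finrank ℝ E : ℝ) / 2) * Real.exp (-(1 / 4) * ‖z‖ ^ 2) := fun z => by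
    rw [stdGaussPdf, mul_assoc, ← Real.exp_add]
    ring_nf
  simp_rw [integral_stdGaussian, hintegrand]
  rw [integral_const_mul, GaussianFourier.integral_rexp_neg_mul_sq_norm (by norm_num),
    show π / (1 / 4) = 2 * (2 * π) by ring, Real.mul_rpow (y := 2 * π) zero_le_two (by positivity),
    mul_left_comm, ← Real.rpow_add (by positivity), neg_div, neg_add_cancel, Real.rpow_zero,
    mul_one]

theorem setIntegral_norm_stdGaussian_le {R : ℝ} (hR : 0 ≤ R) :
    ∫ z in {z | R < ‖z‖}, ‖z‖ ∂stdGaussian E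
      ≤ 2 * Real.exp (-R ^ 2 / 8) * 2 ^ ((finrank ℝ E : ℝ) / 2) := by
  have hexp : Integrable (fun z => Real.exp (‖z‖ ^ 2 / 4)) (stdGaussian E) :=
    .of_integral_ne_zero <| by
      rw [integral_exp_sq_norm_div_four_stdGaussian]
      positivity
  rw [← integral_exp_sq_norm_div_four_stdGaussian, ← integral_const_mul,
    ← integral_indicator (measurableSet_lt measurable_const measurable_norm)]
  refine integral_mono_of_nonneg
    (.of_forall (Set.indicator_nonneg fun z _ => norm_nonneg z))
    (hexp.const_mul _) (.of_forall (Set.indicator_le' (fun z hz => ?_) fun z _ => by positivity))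
  have hz : R < ‖z‖ := hz
  calc ‖z‖ ≤ 2 * Real.exp (‖z‖ ^ 2 / 8) := by
        nlinarith [Real.add_one_le_exp (‖z‖ ^ 2 / 8), sq_nonneg (‖z‖ / 2 - 1)]
    _ ≤ 2 * (Real.exp (-R ^ 2 / 8) * Real.exp (‖z‖ ^ 2 / 4)) := by
        rw [← Real.exp_add]
        gcongr
        nlinarith
    _ = _ := (mul_assoc _ _ _).symm

end StdGaussian

section
open scoped MatrixOrder

theorem abs_det_mul_gaussPdf_add_toEuclideanCLM {n : ℕ} {A : Matrix (Fin n) (Fin n) ℝ}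
    (hA : IsUnit A.det) (μ z : EuclideanSpace ℝ (Fin n)) :
    |A.det| * gaussPdf n μ (A * A.transpose) (μ + Matrix.toEuclideanCLM (𝕜 := ℝ) A z)
      = stdGaussPdf z := by
  have hdet : (A * A.transpose).det ^ (-(1 : ℝ) / 2) = |A.det|⁻¹ := by
    rw [Matrix.det_mul, Matrix.det_transpose, ← abs_mul_abs_self, neg_div,
      Real.rpow_neg (by positivity), ← Real.sqrt_eq_rpow, Real.sqrt_mul_self (abs_nonneg _)]
  have hquad : ∑ i, ∑ j, ((μ + Matrix.toEuclideanCLM (𝕜 := ℝ) A z) i - μ i) *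
      (A * A.transpose)⁻¹ i j * ((μ + Matrix.toEuclideanCLM (𝕜 := ℝ) A z) j - μ j)
        = ‖z‖ ^ 2 :=
    calc _ = A.mulVec z.ofLp ⬝ᵥ (A * A.transpose)⁻¹.mulVec (A.mulVec z.ofLp) := by
          simp only [dotProduct, Matrix.mulVec, PiLp.add_apply, Matrix.ofLp_toEuclideanCLM,
            add_sub_cancel_left, Finset.mul_sum, mul_assoc]
      _ = z.ofLp ⬝ᵥ z.ofLp := by
          rw [Matrix.mul_inv_rev, Matrix.mulVec_mulVec, Matrix.mul_assoc,
            Matrix.nonsing_inv_mul _ hA, Matrix.mul_one, Matrix.dotProduct_mulVec,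
            Matrix.vecMul_mulVec, Matrix.mul_nonsing_inv _ (by rwa [Matrix.det_transpose]),
            Matrix.vecMul_one]
      _ = ‖z‖ ^ 2 := by simp only [EuclideanSpace.real_norm_sq_eq, dotProduct, ← sq]
  rw [gaussPdf, hdet, hquad, stdGaussPdf, finrank_euclideanSpace_fin]
  have := abs_ne_zero.2 hA.ne_zero
  field_simp

theorem det_toEuclideanCLM {ι : Type*} [Fintype ι] [DecidableEq ι] (A : Matrix ι ι ℝ) :
    (Matrix.toEuclideanCLM (𝕜 := ℝ) A).det = A.det := by
  change LinearMap.det (Matrix.toLpLin 2 2 A) = A.det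
  rw [Matrix.toLpLin_eq_toLin, LinearMap.det_toLin]

theorem integral_gaussPdf_mul {n : ℕ} {S : Matrix (Fin n) (Fin n) ℝ} (hS : S.PosDef)
    (μ : EuclideanSpace ℝ (Fin n)) (F : EuclideanSpace ℝ (Fin n) → ℝ) :
    ∫ x, gaussPdf n μ S x * F x = ∫ v, F (μ + v) ∂multivariateGaussian 0 S := by
  set A := CFC.sqrt S with hAdef
  have hAA : A * A.transpose = S := by
    rw [← Matrix.conjTranspose_eq_transpose_of_trivial, hAdef,
      (Matrix.nonneg_iff_posSemidef.1 (CFC.sqrt_nonneg S)).isHermitian.eq,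
      CFC.sqrt_mul_sqrt_self S hS.posSemidef.nonneg]
  have hA : IsUnit A.det := by
    refine isUnit_iff_ne_zero.2 fun h => hS.det_pos.ne ?_
    rw [← hAA, Matrix.det_mul, h, zero_mul]
  let e : EuclideanSpace ℝ (Fin n) ≃L[ℝ] EuclideanSpace ℝ (Fin n) :=
    (Matrix.toEuclideanCLM (𝕜 := ℝ) A).toContinuousLinearEquivOfDetNeZero
      (by rw [det_toEuclideanCLM]; exact hA.ne_zero)
  have hdet : (e : EuclideanSpace ℝ (Fin n) →L[ℝ] _).det = A.det := det_toEuclideanCLM A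
  have hinj : Function.Injective fun z => μ + e z := (add_right_injective μ).comp e.injective
  have hrange : (fun z => μ + e z) '' Set.univ = Set.univ :=
    Set.image_univ_of_surjective ((add_left_surjective μ).comp e.surjective)
  calc ∫ x, gaussPdf n μ S x * F x
      = ∫ z, |A.det| * (gaussPdf n μ S (μ + e z) * F (μ + e z)) := by
        have hcov := integral_image_eq_integral_abs_det_fderiv_smul volume MeasurableSet.univ
          (fun z _ => (e.hasFDerivAt (x := z).const_add μ).hasFDerivWithinAt) hinj.injOn
          fun x => gaussPdf n μ S x * F x
        simpa only [hrange, Measure.restrict_univ, hdet, smul_eq_mul] using hcov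
    _ = ∫ z, F (μ + e z) ∂stdGaussian (EuclideanSpace ℝ (Fin n)) := by
        rw [integral_stdGaussian]
        congr with z
        rw [← mul_assoc, ← hAA]
        exact congrArg (· * F (μ + e z)) (abs_det_mul_gaussPdf_add_toEuclideanCLM hA μ z)
    _ = ∫ v, F (μ + v) ∂multivariateGaussian 0 S := by
        simp only [multivariateGaussian, zero_add]
        exact (e.toHomeomorph.measurableEmbedding.integral_map fun v => F (μ + v)).symm

end

/-! ### Covariance matrices -/

open scoped RealInnerProductSpace in
theorem variance_inner_pos {E : Type*} [NormedAddCommGroup E] [InnerProductSpace ℝ E]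
    [FiniteDimensional ℝ E] [MeasurableSpace E] [BorelSpace E] {ν : Measure E}
    [IsProbabilityMeasure ν] (hν : MemLp id 2 ν) (hac : ν ≪ volume) {w : E} (hw : w ≠ 0) :
    0 < Var[fun x => ⟪w, x⟫; ν] := by
  refine (variance_nonneg _ _).lt_of_ne' fun h0 => ?_
  set c := ν[fun x => ⟪w, x⟫]
  have hconst : ∀ᵐ x ∂ν, ⟪w, x⟫ = c := by
    refine (evariance_eq_zero_iff (by fun_prop)).1 ?_
    exact (hν.const_inner w).ofReal_variance_eq.symm.trans (by simp [h0])
  let H : AffineSubspace ℝ E :=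
    (AffineSubspace.mk' c ⊥).comap (innerSL ℝ w : E →ₗ[ℝ] ℝ).toAffineMap
  have hmem : ∀ x, x ∈ H ↔ ⟪w, x⟫ = c := fun x => by
    simp [H, AffineSubspace.mem_mk', sub_eq_zero]
  have hH : H ≠ ⊤ := fun h => hw <| by
    have h0H := (hmem 0).1 (h ▸ AffineSubspace.mem_top ℝ E 0)
    have hwH := (hmem w).1 (h ▸ AffineSubspace.mem_top ℝ E w)
    rwa [← h0H, inner_zero_right, inner_self_eq_zero] at hwH
  have hnull : ν H = 0 := hac (Measure.addHaar_affineSubspace volume H hH)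
  obtain ⟨x, hxc, hxH⟩ := (hconst.and (measure_eq_zero_iff_ae_notMem.1 hnull)).exists
  exact hxH ((hmem x).2 hxc)

section CovarianceMatrix

open scoped MatrixOrder Matrix RealInnerProductSpace

variable {ι : Type*} [Fintype ι] {ν : Measure (EuclideanSpace ℝ ι)}

/-- The covariance matrix of a measure on `ℝ^ι`, with entries `cov(x i, x j)`. -/
def covarianceMatrix (ν : Measure (EuclideanSpace ℝ ι)) : Matrix ι ι ℝ :=
  .of fun i j => cov[fun x => x i, fun x => x j; ν]

theorem dotProduct_covarianceMatrix_mulVec [IsFiniteMeasure ν] (hν : MemLp id 2 ν)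
    (w : EuclideanSpace ℝ ι) :
    w.ofLp ⬝ᵥ covarianceMatrix ν *ᵥ w.ofLp = Var[fun x => ⟪w, x⟫; ν] := by
  have hmap : ν.map (fun x => WithLp.toLp 2 fun i => x i) = ν := Measure.map_id
  have hsum := covarianceBilin_apply_pi (μ := ν) (X := fun i x => x i)
    (fun i => hν.eval_piLp i) w w
  rw [hmap, covarianceBilin_self hν] at hsum
  simp only [hsum, dotProduct, Matrix.mulVec, covarianceMatrix, Matrix.of_apply, Finset.mul_sum]
  refine Finset.sum_congr rfl fun i _ => Finset.sum_congr rfl fun j _ => ?_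
  ring

theorem posSemidef_covarianceMatrix [IsFiniteMeasure ν] (hν : MemLp id 2 ν) :
    (covarianceMatrix ν).PosSemidef := by
  refine .of_dotProduct_mulVec_nonneg (Matrix.ext fun i j => covariance_comm _ _) fun w => ?_
  rw [star_trivial]
  exact (variance_nonneg _ _).trans_eq (dotProduct_covarianceMatrix_mulVec hν (.toLp 2 w)).symm

theorem posDef_covarianceMatrix [IsProbabilityMeasure ν] (hν : MemLp id 2 ν)
    (hac : ν ≪ volume) : (covarianceMatrix ν).PosDef := by
  refine .of_dotProduct_mulVec_pos (posSemidef_covarianceMatrix hν).isHermitian fun w hw => ?_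
  rw [star_trivial]
  exact (variance_inner_pos hν hac (w := .toLp 2 w) (by simpa using hw)).trans_eq
    (dotProduct_covarianceMatrix_mulVec hν (.toLp 2 w)).symm

variable [DecidableEq ι]

theorem inner_toEuclideanCLM_sqrt_right (S : Matrix ι ι ℝ) (w z : EuclideanSpace ℝ ι) :
    ⟪w, Matrix.toEuclideanCLM (𝕜 := ℝ) (CFC.sqrt S) z⟫
      = ⟪Matrix.toEuclideanCLM (𝕜 := ℝ) (CFC.sqrt S) w, z⟫ :=
  ((((CFC.sqrt_nonneg S).isSelfAdjoint).map (Matrix.toEuclideanCLM (𝕜 := ℝ))).isSymmetric w z).symm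

theorem sq_norm_toEuclideanCLM_sqrt {S : Matrix ι ι ℝ} (hS : S.PosSemidef)
    (w : EuclideanSpace ℝ ι) :
    ‖Matrix.toEuclideanCLM (𝕜 := ℝ) (CFC.sqrt S) w‖ ^ 2 = w.ofLp ⬝ᵥ S *ᵥ w.ofLp := by
  rw [← real_inner_self_eq_norm_sq, ← inner_toEuclideanCLM_sqrt_right,
    EuclideanSpace.inner_eq_star_dotProduct, star_trivial, Matrix.ofLp_toEuclideanCLM,
    Matrix.ofLp_toEuclideanCLM, Matrix.mulVec_mulVec, CFC.sqrt_mul_sqrt_self S hS.nonneg,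
    dotProduct_comm]

theorem norm_toEuclideanCLM_sqrt_smul_covarianceMatrix [IsFiniteMeasure ν]
    (hν : MemLp id 2 ν) {δ : ℝ} (hδ : 0 ≤ δ) (w : EuclideanSpace ℝ ι) :
    ‖Matrix.toEuclideanCLM (𝕜 := ℝ) (CFC.sqrt (δ • covarianceMatrix ν)) w‖
      = √δ * √Var[fun x => ⟪w, x⟫; ν] := by
  rw [← Real.sqrt_mul hδ, ← dotProduct_covarianceMatrix_mulVec hν, ← smul_eq_mul,
    ← dotProduct_smul, ← Matrix.smul_mulVec,
    ← sq_norm_toEuclideanCLM_sqrt ((posSemidef_covarianceMatrix hν).smul hδ),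
    Real.sqrt_sq (norm_nonneg _)]

theorem toEuclideanCLM_sqrt_mem_zonoid [IsProbabilityMeasure ν] {C : ℝ≥0}
    (hPL : IsPrekopaLeindler ν C) (hν : MemLp id 2 ν) {δ : ℝ} (hδ : 0 ≤ δ)
    {z : EuclideanSpace ℝ ι} (hz : 24 * C * √δ * ‖z‖ ≤ 1) :
    Matrix.toEuclideanCLM (𝕜 := ℝ) (CFC.sqrt (δ • covarianceMatrix ν)) z ∈ zonoid ν := by
  intro l
  obtain ⟨w, rfl⟩ := (InnerProductSpace.toDual ℝ (EuclideanSpace ℝ ι)).surjective l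
  set A := Matrix.toEuclideanCLM (𝕜 := ℝ) (CFC.sqrt (δ • covarianceMatrix ν))
  set l := InnerProductSpace.toDual ℝ (EuclideanSpace ℝ ι) w
  calc 2 * ⟪w, A z⟫ = 2 * ⟪A w, z⟫ := by rw [inner_toEuclideanCLM_sqrt_right]
    _ ≤ 2 * (‖A w‖ * ‖z‖) := by
        gcongr
        exact real_inner_le_norm _ _
    _ = 2 * √δ * ‖z‖ * √Var[l; ν] := by
        rw [norm_toEuclideanCLM_sqrt_smul_covarianceMatrix hν hδ]
        change _ = 2 * √δ * ‖z‖ * √Var[fun x => ⟪w, x⟫; ν]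
        ring
    _ ≤ 2 * √δ * ‖z‖ * (12 * C * ∫ x, |l x - ν[l]| ∂ν) := by
        gcongr
        exact hPL.sqrt_variance_le_mul_integral_abs_sub
          (l.integrable_comp (hν.integrable one_le_two))
    _ = 24 * C * √δ * ‖z‖ * ∫ x, |l x - ν[l]| ∂ν := by ring
    _ ≤ ∫ x, |l x - ν[l]| ∂ν :=
        mul_le_of_le_one_left (integral_nonneg fun x => abs_nonneg _) hz

theorem setIntegral_compl_zonoid_norm_multivariateGaussian_le [IsProbabilityMeasure ν] {C : ℝ≥0}
    (hPL : IsPrekopaLeindler ν C) (hν : MemLp id 2 ν) {δ D R : ℝ} (hδ : 0 ≤ δ)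
    (hR : 0 ≤ R) (hδR : 24 * C * √δ * R ≤ 1)
    (hD0 : 0 ≤ D) (hD : ∀ w, √Var[fun x => ⟪w, x⟫; ν] ≤ D * ‖w‖) :
    ∫ v in (zonoid ν)ᶜ, ‖v‖ ∂multivariateGaussian 0 (δ • covarianceMatrix ν)
      ≤ √δ * D * (2 * Real.exp (-R ^ 2 / 8) * 2 ^ ((Fintype.card ι : ℝ) / 2)) := by
  set A := Matrix.toEuclideanCLM (𝕜 := ℝ) (CFC.sqrt (δ • covarianceMatrix ν)) with hA
  have hAD : ∀ w, ‖A w‖ ≤ √δ * D * ‖w‖ := fun w => by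
    rw [hA, norm_toEuclideanCLM_sqrt_smul_covarianceMatrix hν hδ, mul_assoc]
    gcongr
    exact hD w
  have hint : Integrable (‖·‖) (stdGaussian (EuclideanSpace ℝ ι)) := IsGaussian.integrable_id.norm
  have htail : A ⁻¹' (zonoid ν)ᶜ ⊆ {z | R < ‖z‖} := fun z hz => by
    by_contra hzR
    refine hz (toEuclideanCLM_sqrt_mem_zonoid hPL hν hδ (le_trans ?_ hδR))
    gcongr
    exact not_lt.1 hzR
  calc ∫ v in (zonoid ν)ᶜ, ‖v‖ ∂multivariateGaussian 0 (δ • covarianceMatrix ν)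
      = ∫ z in A ⁻¹' (zonoid ν)ᶜ, ‖A z‖ ∂stdGaussian (EuclideanSpace ℝ ι) := by
        simp only [multivariateGaussian, zero_add]
        exact setIntegral_map isClosed_zonoid.isOpen_compl.measurableSet (by fun_prop)
          (by fun_prop)
    _ ≤ ∫ z in {z | R < ‖z‖}, √δ * D * ‖z‖ ∂stdGaussian (EuclideanSpace ℝ ι) := by
        refine (setIntegral_mono (A.integrable_comp IsGaussian.integrable_id).norm.integrableOn
          (hint.const_mul _).integrableOn hAD).trans ?_
        refine setIntegral_mono_set (hint.const_mul _).integrableOn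
          (.of_forall fun z => (norm_nonneg _).trans (hAD z)) htail.eventuallyLE
    _ ≤ √δ * D * (2 * Real.exp (-R ^ 2 / 8) * 2 ^ ((Fintype.card ι : ℝ) / 2)) := by
        rw [integral_const_mul, ← finrank_euclideanSpace (𝕜 := ℝ)]
        exact mul_le_mul_of_nonneg_left (setIntegral_norm_stdGaussian_le hR) (by positivity)

end CovarianceMatrix

/-! ### The Gaussian core -/

theorem memLp_id_of_ae_mem {E : Type*} [NormedAddCommGroup E] [SecondCountableTopology E]
    [MeasurableSpace E] [BorelSpace E] {ν : Measure E} [IsFiniteMeasure ν] {K : Set E}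
    (hK : Bornology.IsBounded K) (hνK : ∀ᵐ x ∂ν, x ∈ K) (q : ℝ≥0∞) : MemLp id q ν := by
  obtain ⟨B, hB⟩ := hK.exists_norm_le
  exact .of_bound aestronglyMeasurable_id B (hνK.mono hB)

open scoped RealInnerProductSpace in
theorem sqrt_variance_inner_le_of_ae_mem {E : Type*} [NormedAddCommGroup E]
    [InnerProductSpace ℝ E] [MeasurableSpace E] [BorelSpace E] {ν : Measure E}
    [IsProbabilityMeasure ν] {K : Set E} (hK : Bornology.IsBounded K)
    (hνK : ∀ᵐ x ∂ν, x ∈ K) (w : E) :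
    √Var[fun x => ⟪w, x⟫; ν] ≤ Metric.diam K * ‖w‖ := by
  obtain ⟨y, hy⟩ := hνK.exists
  have hosc : ∀ x ∈ K, |⟪w, x⟫ - ⟪w, y⟫| ≤ Metric.diam K * ‖w‖ := fun x hx =>
    calc |⟪w, x⟫ - ⟪w, y⟫| = |⟪w, x - y⟫| := by rw [inner_sub_right]
      _ ≤ ‖w‖ * ‖x - y‖ := abs_real_inner_le_norm _ _
      _ ≤ Metric.diam K * ‖w‖ := by
        rw [mul_comm, ← dist_eq_norm]
        gcongr
        exact Metric.dist_le_diam_of_mem hK hx hy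
  refine Real.sqrt_le_left (by positivity) |>.2 ?_
  calc Var[fun x => ⟪w, x⟫; ν] ≤ ((⟪w, y⟫ + Metric.diam K * ‖w‖
        - (⟪w, y⟫ - Metric.diam K * ‖w‖)) / 2) ^ 2 :=
        variance_le_sq_of_bounded (hνK.mono fun x hx =>
          Set.mem_Icc_iff_abs_le.1 (by rw [abs_sub_comm]; exact hosc x hx)) (by fun_prop)
    _ = (Metric.diam K * ‖w‖) ^ 2 := by ring

open scoped RealInnerProductSpace in
theorem integral_comp_mean_add_multivariateGaussian_le_add_tail {ι : Type*} [Fintype ι]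
    [DecidableEq ι] {ν : Measure (EuclideanSpace ℝ ι)} [IsProbabilityMeasure ν] {C L b : ℝ≥0}
    {a δ κ D R : ℝ} (hPL : IsPrekopaLeindler ν C) (hν : MemLp id 2 ν)
    {f : EuclideanSpace ℝ ι → ℝ} (hconv : ConvexOn ℝ Set.univ f) (hLip : LipschitzWith L f)
    (hab : a + (b : ℝ) = 1) (hδ : 0 ≤ δ) (hκ : 0 ≤ κ) (hκδ : a ^ 2 * κ + b ^ 2 * δ = κ)
    (hR : 0 ≤ R) (hδR : 24 * C * √δ * R ≤ 1)
    (hD0 : 0 ≤ D) (hD : ∀ w, √Var[fun x => ⟪w, x⟫; ν] ≤ D * ‖w‖) :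
    ∫ v, f (ν[id] + v) ∂multivariateGaussian 0 (κ • covarianceMatrix ν)
      ≤ (∫ v, ∫ x, f (a • (ν[id] + v) + (b : ℝ) • x) ∂ν
          ∂multivariateGaussian 0 (κ • covarianceMatrix ν))
        + L * b * (√δ * D * (2 * Real.exp (-R ^ 2 / 8) * 2 ^ ((Fintype.card ι : ℝ) / 2))) := by
  have hCov := posSemidef_covarianceMatrix hν
  have := isNegInvariant_multivariateGaussian_zero (hCov.smul hδ)
  have hlaw := map_smul_add_smul_prod_multivariateGaussian (hCov.smul hκ) (hCov.smul hδ) 0 0 a b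
  rw [smul_zero, smul_zero, add_zero, smul_smul, smul_smul, ← add_smul, hκδ] at hlaw
  refine (integral_comp_mean_add_le_interpolation (hν.integrable one_le_two)
    IsGaussian.integrable_id IsGaussian.integrable_id hconv hLip hab hlaw).trans ?_
  gcongr
  exact setIntegral_compl_zonoid_norm_multivariateGaussian_le hPL hν hδ hR hδR hD0 hD

/-- The measure with density `p` with respect to Lebesgue measure; it turns the densities of the
theorem into laws. -/
def densMeasure {E : Type*} [MeasureSpace E] (p : E → ℝ) : Measure E :=
  volume.withDensity fun x => ENNReal.ofReal (p x)

section densMeasure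

variable {E : Type*} [MeasureSpace E] {p : E → ℝ}

theorem isProbabilityMeasure_densMeasure (hpi : Integrable p) (hp0 : ∀ x, 0 ≤ p x)
    (hp1 : ∫ x, p x = 1) : IsProbabilityMeasure (densMeasure p) :=
  ⟨by
    rw [densMeasure, withDensity_apply _ .univ, Measure.restrict_univ,
      ← ofReal_integral_eq_lintegral_ofReal hpi (.of_forall hp0), hp1, ENNReal.ofReal_one]⟩

theorem integral_densMeasure (hpm : AEMeasurable p) (hp0 : ∀ x, 0 ≤ p x) {F : Type*}
    [NormedAddCommGroup F] [NormedSpace ℝ F] (g : E → F) :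
    ∫ x, g x ∂densMeasure p = ∫ x, p x • g x := by
  rw [densMeasure, integral_withDensity_eq_integral_toReal_smul₀ hpm.ennreal_ofReal (by simp)]
  simp only [ENNReal.toReal_ofReal (hp0 _)]

theorem ae_mem_densMeasure (hpm : AEMeasurable p) {K : Set E} (hsupp : ∀ x, x ∉ K → p x = 0) :
    ∀ᵐ x ∂densMeasure p, x ∈ K := by
  rw [densMeasure, ae_withDensity_iff' hpm.ennreal_ofReal]
  refine .of_forall fun x hx => ?_
  by_contra hxK
  simp [hsupp x hxK] at hx

end densMeasure

theorem ApproxLogConcave.isPrekopaLeindler_densMeasure {E : Type*} [NormedAddCommGroup E]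
    [InnerProductSpace ℝ E] [FiniteDimensional ℝ E] [MeasurableSpace E] [BorelSpace E]
    {p : E → ℝ} {η : ℝ≥0} (hη : 0 < η) (hp : ApproxLogConcave η p) (hp0 : ∀ x, 0 ≤ p x)
    (hpm : AEMeasurable p) : IsPrekopaLeindler (densMeasure p) (η⁻¹ ^ 2) := by
  rw [← one_mul (η⁻¹ ^ 2)]
  refine (isPrekopaLeindler_volume E).withDensity hpm.ennreal_ofReal fun a b ha hb hab x y => ?_
  rw [ENNReal.ofReal_rpow_of_nonneg (hp0 x) ha.le, ENNReal.ofReal_rpow_of_nonneg (hp0 y) hb.le,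
    ← ENNReal.ofReal_mul (Real.rpow_nonneg (hp0 x) a), ← ENNReal.ofReal_coe_nnreal,
    ← ENNReal.ofReal_mul (NNReal.coe_nonneg _)]
  refine ENNReal.ofReal_le_ofReal ?_
  exact_mod_cast hp.rpow_mul_rpow_le (NNReal.coe_pos.2 hη) ha.le hb.le hab x y

section
variable {n : ℕ} {p : EuclideanSpace ℝ (Fin n) → ℝ}

theorem mean_densMeasure (hpm : AEMeasurable p) (hp0 : ∀ x, 0 ≤ p x) :
    (densMeasure p)[id] = densMean n p :=
  integral_densMeasure hpm hp0 _

theorem covarianceMatrix_densMeasure (hpi : Integrable p) (hp0 : ∀ x, 0 ≤ p x)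
    (hp1 : ∫ x, p x = 1) (hν : MemLp id 2 (densMeasure p)) :
    covarianceMatrix (densMeasure p) = densCov n p := by
  have := isProbabilityMeasure_densMeasure hpi hp0 hp1
  have hmean : ∀ i, ∫ x, x i ∂densMeasure p = densMean n p i := fun i => by
    rw [← mean_densMeasure hpi.aemeasurable hp0]
    exact (EuclideanSpace.proj i).integral_comp_comm (hν.integrable one_le_two)
  ext i j
  simp only [covarianceMatrix, densCov, Matrix.of_apply, covariance, hmean]
  exact integral_densMeasure hpi.aemeasurable hp0 _

end

theorem gaussian_tail_error_le {n : ℕ} (hn : 1 ≤ n) {T : ℝ} (hT : 10 ≤ T) :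
    T * T * (2 * Real.exp (-(8 * √(n * Real.log T)) ^ 2 / 8) * 2 ^ ((n : ℝ) / 2)) ≤
      1 / T ^ 2 := by
  have hT0 : 0 < T := by linarith
  have hn' : (1 : ℝ) ≤ n := by exact_mod_cast hn
  have hlog : 1 ≤ Real.log T := by
    rw [Real.le_log_iff_exp_le hT0]
    linarith [Real.exp_one_lt_d9]
  have htwo : (2 : ℝ) ≤ Real.exp 1 := by linarith [Real.add_one_le_exp 1]
  have hexp : -(8 * √(n * Real.log T)) ^ 2 / 8 = -8 * (n * Real.log T) := by
    rw [mul_pow, Real.sq_sqrt (by positivity)]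
    ring
  rw [hexp, le_div_iff₀ (by positivity)]
  calc T * T * (2 * Real.exp (-8 * (n * Real.log T)) * 2 ^ ((n : ℝ) / 2)) * T ^ 2
      = 2 * 2 ^ ((n : ℝ) / 2) * Real.exp (-8 * (n * Real.log T)) * T ^ 4 := by ring
    _ ≤ Real.exp 1 * Real.exp 1 ^ ((n : ℝ) / 2) * Real.exp (-8 * (n * Real.log T))
          * Real.exp (Real.log T) ^ 4 := by
      rw [Real.exp_log hT0]
      gcongr
    _ = Real.exp (1 + (n : ℝ) / 2 + -8 * (n * Real.log T) + 4 * Real.log T) := by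
      rw [Real.exp_one_rpow, ← Real.exp_nat_mul, Real.exp_add, Real.exp_add, Real.exp_add,
        Nat.cast_ofNat]
    _ ≤ 1 := by
      rw [Real.exp_le_one_iff]
      nlinarith [mul_le_mul hn' hlog zero_le_one (by linarith)]

theorem IsPrekopaLeindler.integral_comp_mean_add_multivariateGaussian_le {n : ℕ} (hn : 1 ≤ n)
    {T : ℝ} (hT : 10 ≤ T) {C : ℝ≥0} {ε lam : ℝ} (hε0 : 0 ≤ ε) (hε : 192 * C * ε ≤ 1)
    (hlam : lam ∈ Set.Icc (0 : ℝ) 1) {ν : Measure (EuclideanSpace ℝ (Fin n))}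
    [IsProbabilityMeasure ν] (hPL : IsPrekopaLeindler ν C) {K : Set (EuclideanSpace ℝ (Fin n))}
    (hK : Bornology.IsBounded K) (hKdiam : Metric.diam K ≤ T) (hνK : ∀ᵐ x ∂ν, x ∈ K)
    {f : EuclideanSpace ℝ (Fin n) → ℝ} (hconv : ConvexOn ℝ Set.univ f)
    (hLip : LipschitzWith T.toNNReal f) :
    ∫ v, f (ν[id] + v) ∂multivariateGaussian 0
        ((ε ^ 2 / (n * Real.log T) * (lam / (2 - lam))) • covarianceMatrix ν)
      ≤ (∫ v, ∫ x, f ((1 - lam) • (ν[id] + v) + lam • x) ∂ν ∂multivariateGaussian 0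
          ((ε ^ 2 / (n * Real.log T) * (lam / (2 - lam))) • covarianceMatrix ν)) + 1 / T ^ 2 := by
  have hT0 : 0 ≤ T := by linarith
  have hnlog : 1 ≤ n * Real.log T := one_le_mul_of_one_le_of_one_le (by exact_mod_cast hn)
    ((Real.le_log_iff_exp_le (by linarith)).2 (by linarith [Real.exp_one_lt_d9]))
  have hC : (1 : ℝ) ≤ C := by exact_mod_cast hPL.one_le
  have h2lam : 0 < 2 - lam := by linarith [hlam.2]
  set s := √(n * Real.log T)
  have hs : 1 ≤ s := Real.one_le_sqrt.2 hnlog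
  have hsqrt : √(ε ^ 2 / (n * Real.log T)) = ε / s := by
    rw [Real.sqrt_div (sq_nonneg ε), Real.sqrt_sq hε0]
  have hεs : ε / s ≤ 1 := div_le_one_of_le₀ (by nlinarith) (by linarith)
  have htail := integral_comp_mean_add_multivariateGaussian_le_add_tail (a := 1 - lam)
    (b := .mk lam hlam.1) (δ := ε ^ 2 / (n * Real.log T))
    (κ := ε ^ 2 / (n * Real.log T) * (lam / (2 - lam))) (R := 8 * s) (D := T)
    hPL (memLp_id_of_ae_mem hK hνK 2) hconv hLip (sub_add_cancel 1 lam) (by positivity)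
    (mul_nonneg (by positivity) (div_nonneg hlam.1 h2lam.le))
    (by rw [NNReal.coe_mk]; field_simp; ring) (by positivity)
    (by rw [hsqrt]; field_simp; linarith) hT0
    fun w => (sqrt_variance_inner_le_of_ae_mem hK hνK w).trans (by gcongr)
  rw [hsqrt, Real.coe_toNNReal T hT0, NNReal.coe_mk, Fintype.card_fin] at htail
  refine htail.trans (add_le_add_right ?_ _)
  refine le_trans ?_ (gaussian_tail_error_le hn hT)
  rw [← mul_assoc]
  gcongr ?_ * _
  calc T * lam * (ε / s * T) = T * T * (lam * (ε / s)) := by ring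
    _ ≤ T * T := mul_le_of_le_one_right (by positivity)
        (mul_le_one₀ hlam.2 (by positivity) hεs)

theorem gaussian_core_convex_domination_general
    {n : ℕ} (hn : 1 ≤ n) {T : ℝ} (hT : 10 ≤ T) {η ε lam : ℝ} (hη : 0 < η) (hε0 : 0 < ε)
    (hε : 192 * ε ≤ η ^ 2) (hlam : lam ∈ Set.Ioc (0 : ℝ) 1)
    {K : Set (EuclideanSpace ℝ (Fin n))} (hK : Bornology.IsBounded K) (hKdiam : Metric.diam K ≤ T)
    {p : EuclideanSpace ℝ (Fin n) → ℝ} (hp0 : ∀ x, 0 ≤ p x) (hp1 : ∫ x, p x = 1)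
    (hpsupp : ∀ x, x ∉ K → p x = 0) (hplc : ApproxLogConcave η p)
    {f : EuclideanSpace ℝ (Fin n) → ℝ} (hfconv : ConvexOn ℝ Set.univ f)
    (hfLip : LipschitzWith T.toNNReal f) :
    ∫ x, gaussPdf n (densMean n p)
        ((ε ^ 2 / (n * Real.log T) * (lam / (2 - lam))) • densCov n p) x * f x
      ≤ (∫ c, ∫ x,
            gaussPdf n (densMean n p)
                ((ε ^ 2 / (n * Real.log T) * (lam / (2 - lam))) • densCov n p) c
              * (p x * f ((1 - lam) • c + lam • x)))
        + 1 / T ^ 2 := by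
  lift η to ℝ≥0 using hη.le
  have hpi : Integrable p := .of_integral_ne_zero (by simp [hp1])
  have := isProbabilityMeasure_densMeasure hpi hp0 hp1
  have hsupp := ae_mem_densMeasure hpi.aemeasurable hpsupp
  have hmem := memLp_id_of_ae_mem hK hsupp 2
  have hκ : 0 < ε ^ 2 / (n * Real.log T) * (lam / (2 - lam)) := by
    have hlogT : 0 < Real.log T := Real.log_pos (by linarith)
    have hlam0 := hlam.1
    have h2lam : 0 < 2 - lam := by linarith [hlam.2]
    positivity
  have hcov := (posDef_covarianceMatrix hmem (withDensity_absolutelyContinuous _ _)).smul hκ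
  simp_rw [integral_const_mul]
  rw [← covarianceMatrix_densMeasure hpi hp0 hp1 hmem, ← mean_densMeasure hpi.aemeasurable hp0,
    integral_gaussPdf_mul hcov, integral_gaussPdf_mul hcov]
  simp_rw [← smul_eq_mul (a := p _), ← integral_densMeasure hpi.aemeasurable hp0]
  have hPL := hplc.isPrekopaLeindler_densMeasure (NNReal.coe_pos.1 hη) hp0 hpi.aemeasurable
  refine hPL.integral_comp_mean_add_multivariateGaussian_le hn hT hε0.le ?_
    (Set.Ioc_subset_Icc_self hlam) hK hKdiam hsupp hfconv hfLip
  push_cast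
  field_simp
  exact hε

/-- **Lemma 4.1.** The Gaussian core `c[p]` is approximately convexly dominated by the
kernelized measure `K[p]p`, the law of `(1-λ)C + λX` with `C ∼ c[p]`, `X ∼ p` independent. -/
theorem gaussian_core_convex_domination
    (n : ℕ) (hn : 1 ≤ n) (T : ℝ) (hT : 10 ≤ T) (hTn : (n : ℝ) ≤ T)
    (ε lam : ℝ) (hε : ε = 1 / (1600 * Real.exp 1)) (hlam : lam ∈ Set.Ioo (0 : ℝ) (1 / 2))
    (K : Set (EuclideanSpace ℝ (Fin n))) (hKcompact : IsCompact K) (hKconv : Convex ℝ K)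
    (hKint : (interior K).Nonempty) (hKdiam : Metric.diam K ≤ T)
    (p : EuclideanSpace ℝ (Fin n) → ℝ) (hp0 : ∀ x, 0 ≤ p x)
    (hp1 : ∫ x, p x = 1) (hpsupp : ∀ x, x ∉ K → p x = 0)
    (hplc : ApproxLogConcave (1 / Real.exp 1) p)
    (f : EuclideanSpace ℝ (Fin n) → ℝ)
    (hf0 : ∀ x, 0 ≤ f x) (hfconv : ConvexOn ℝ Set.univ f)
    (hfLip : LipschitzWith T.toNNReal f)
    (hf1 : ∀ x ∈ K, f x ≤ 1) :
    ∫ x, gaussPdf n (densMean n p)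
        ((ε ^ 2 / (n * Real.log T) * (lam / (2 - lam))) • densCov n p) x * f x
      ≤ (∫ c, ∫ x,
            gaussPdf n (densMean n p)
                ((ε ^ 2 / (n * Real.log T) * (lam / (2 - lam))) • densCov n p) c
              * (p x * f ((1 - lam) • c + lam • x)))
        + 1 / T ^ 2 := by
  subst hε
  exact gaussian_core_convex_domination_general hn hT (by positivity) (by positivity)
    (by field_simp; linarith [Real.exp_one_lt_d9]) ⟨hlam.1, by linarith [hlam.2]⟩
    hKcompact.isBounded hKdiam hp0 hp1 hpsupp hplc hfconv hfLip
end
end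

section
/- Let ε ∈ (0,1/2), let p be an isotropic ε-approximately log-concave probability density on ℝⁿ, and let r be a probability measure with mean 0 whose support is contained in the Euclidean ball {x ∈ ℝⁿ : |x| ≤ ε/80}. Then r is convexly dominated by p; that is, for every convex function φ : ℝⁿ → ℝ that is integrable with respect to p, one has ∫ φ dr ≤ ∫ φ dp. -/
/-!
By the Prékopa–Leindler inequality, every one-dimensional marginal of a log-concave measure is
log-concave, so the mass `D s` of the interval of fixed radius around `s` satisfies
`D (s + t) * D 0 ≤ D s * D t` for `s` and `t` of the same sign. Integrating this against `|s * t|`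
bounds `D 0` times the third moment of the marginal by the square of its first. Together with
`(𝔼 Y ^ 2) ^ 2 ≤ 𝔼 |Y| * 𝔼 |Y| ^ 3`, and since the `ε`-approximation costs only powers of `ε`, this
gives the reverse Hölder inequality `ε ^ 2 * 𝔼 Y ^ 2 ≤ 64 * (𝔼 |Y|) ^ 2`; by isotropy, every linear
functional `l` satisfies `ε * ‖l‖ ≤ 8 * ∫ |l|`.

Now `φ` lies above the maximum of its supporting affine functions at `0` and at a point `u`. Their
slopes differ by a functional `l`, and this maximum has `p`-mean at least `φ u`, up to a linear
function of `u`, as soon as `∫ |l|` compensates `l u`, that is, when `‖u‖ ≤ ε / 16`. Integrating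
over `u` against `r` kills the linear function.
-/

open MeasureTheory ProbabilityTheory Real

noncomputable section

open Metric Set
open scoped ENNReal Pointwise

section BrunnMinkowski

theorem measure_add_le_of_forall_isCompact {α : Type*} [TopologicalSpace α] [MeasurableSpace α]
    {μ : Measure α} [μ.InnerRegular] {A : Set α} (hA : MeasurableSet A) {x c : ℝ≥0∞}
    (h : ∀ K ⊆ A, IsCompact K → μ K + x ≤ c) : μ A + x ≤ c := by
  rw [hA.measure_eq_iSup_isCompact, ENNReal.iSup_add]
  refine iSup_le fun K => ?_
  by_cases hKA : K ⊆ A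
  · by_cases hK : IsCompact K
    · simpa [hKA, hK] using h K hKA hK
    · simpa [hK] using h ∅ (empty_subset A) isCompact_empty
  · simpa [hKA] using h ∅ (empty_subset A) isCompact_empty

theorem volume_add_volume_le_of_isCompact {K L : Set ℝ} (hK : IsCompact K) (hL : IsCompact L)
    (hK₀ : K.Nonempty) (hL₀ : L.Nonempty) : volume K + volume L ≤ volume (K + L) := by
  -- The translates `sInf L + K` and `sSup K + L` lie in `K + L` and share a single point.
  have hinter : volume ((sInf L +ᵥ K) ∩ (sSup K +ᵥ L)) = 0 := by
    refine measure_mono_null (t := {sSup K + sInf L}) ?_ volume_singleton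
    rintro _ ⟨⟨x, hx, rfl⟩, ⟨y, hy, hxy⟩⟩
    have hxM : x ≤ sSup K := le_csSup hK.bddAbove hx
    have hmy : sInf L ≤ y := csInf_le hL.bddBelow hy
    simp only [vadd_eq_add, mem_singleton_iff] at hxy ⊢
    linarith
  calc volume K + volume L = volume (sInf L +ᵥ K) + volume (sSup K +ᵥ L) := by
        rw [measure_vadd, measure_vadd]
    _ = volume ((sInf L +ᵥ K) ∪ (sSup K +ᵥ L)) :=
        (measure_union₀ (hL.measurableSet.const_vadd _).nullMeasurableSet hinter).symm
    _ ≤ volume (K + L) := measure_mono (union_subset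
        ((vadd_set_subset_add (hL.sInf_mem hL₀)).trans_eq (add_comm L K))
        (vadd_set_subset_add (hK.sSup_mem hK₀)))

theorem volume_add_volume_le {A B S : Set ℝ} (hA : MeasurableSet A) (hB : MeasurableSet B)
    (hA₀ : A.Nonempty) (hB₀ : B.Nonempty) (hS : A + B ⊆ S) :
    volume A + volume B ≤ volume S := by
  obtain ⟨x₀, hx₀⟩ := hA₀
  obtain ⟨y₀, hy₀⟩ := hB₀
  refine measure_add_le_of_forall_isCompact hA fun K hKA hK => ?_
  rw [add_comm]
  refine measure_add_le_of_forall_isCompact hB fun L hLB hL => ?_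
  calc volume L + volume K ≤ volume (insert x₀ K) + volume (insert y₀ L) := by
        rw [add_comm]
        gcongr <;> exact subset_insert _ _
    _ ≤ volume (insert x₀ K + insert y₀ L) :=
        volume_add_volume_le_of_isCompact (hK.insert _) (hL.insert _) (insert_nonempty _ _)
          (insert_nonempty _ _)
    _ ≤ volume S :=
        measure_mono ((add_subset_add (insert_subset hx₀ hKA) (insert_subset hy₀ hLB)).trans hS)

theorem ofReal_mul_volume_add_le {A B S : Set ℝ} {a b : ℝ} (ha : 0 < a) (hb : 0 < b)
    (hA : MeasurableSet A) (hB : MeasurableSet B) (hA₀ : A.Nonempty) (hB₀ : B.Nonempty)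
    (hS : a • A + b • B ⊆ S) :
    ENNReal.ofReal a * volume A + ENNReal.ofReal b * volume B ≤ volume S := by
  simpa [Measure.addHaar_smul, abs_of_pos ha, abs_of_pos hb] using
    volume_add_volume_le (hA.const_smul₀ a) (hB.const_smul₀ b) hA₀.smul_set hB₀.smul_set hS

end BrunnMinkowski

section PrekopaLeindler

theorem ennreal_rpow_mul_rpow_le_add {a b : ℝ} (ha : 0 < a) (hb : 0 < b) (hab : a + b = 1)
    (x y : ℝ≥0∞) : x ^ a * y ^ b ≤ ENNReal.ofReal a * x + ENNReal.ofReal b * y := by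
  have hconj : Real.HolderConjugate a⁻¹ b⁻¹ :=
    Real.holderConjugate_iff.2 ⟨(one_lt_inv₀ ha).2 (by linarith), by simpa using hab⟩
  calc x ^ a * y ^ b
      ≤ (x ^ a) ^ a⁻¹ / ENNReal.ofReal a⁻¹ + (y ^ b) ^ b⁻¹ / ENNReal.ofReal b⁻¹ :=
        ENNReal.young_inequality (x ^ a) (y ^ b) hconj
    _ = ENNReal.ofReal a * x + ENNReal.ofReal b * y := by
        rw [ENNReal.rpow_rpow_inv ha.ne', ENNReal.rpow_rpow_inv hb.ne',
          ENNReal.ofReal_inv_of_pos ha, ENNReal.ofReal_inv_of_pos hb, div_eq_mul_inv,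
          div_eq_mul_inv, inv_inv, inv_inv, mul_comm x, mul_comm y]

theorem lintegral_eq_lintegral_measure_ofReal_lt {α : Type*} [MeasurableSpace α] (μ : Measure α)
    {f : α → ℝ≥0∞} (hf : Measurable f) (hfin : ∀ x, f x ≠ ∞) :
    ∫⁻ x, f x ∂μ = ∫⁻ t in Ioi (0 : ℝ), μ {x | ENNReal.ofReal t < f x} := by
  have hlayer := lintegral_eq_lintegral_meas_lt (f := fun x => (f x).toReal) μ
    (Filter.Eventually.of_forall fun _ => ENNReal.toReal_nonneg) hf.ennreal_toReal.aemeasurable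
  simp only [ENNReal.ofReal_toReal (hfin _)] at hlayer
  rw [hlayer]
  refine setLIntegral_congr_fun measurableSet_Ioi fun t ht => ?_
  simp only [ENNReal.ofReal_lt_iff_lt_toReal (mem_Ioi.1 ht).le (hfin _)]

/-- The Prékopa–Leindler inequality for a measure `μ`; for the indicators of sets it says that `μ`
is a log-concave measure. It serves as the definition of log-concavity for measures, being stable
under linear images, products and log-concave densities. -/
def PrekopaLeindler {E : Type*} [MeasurableSpace E] [AddCommMonoid E] [SMul ℝ E]
    (μ : Measure E) : Prop :=
  ∀ ⦃a b : ℝ⦄, 0 < a → 0 < b → a + b = 1 →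
    ∀ ⦃f g h : E → ℝ≥0∞⦄, Measurable f → Measurable g → Measurable h →
      (∀ x y, f x ^ a * g y ^ b ≤ h (a • x + b • y)) →
        (∫⁻ x, f x ∂μ) ^ a * (∫⁻ x, g x ∂μ) ^ b ≤ ∫⁻ x, h x ∂μ

variable {a b : ℝ}

theorem ofReal_mul_volume_lt_add_le (ha : 0 < a) (hb : 0 < b) (hab : a + b = 1)
    {f g h : ℝ → ℝ≥0∞} (hf : Measurable f) (hg : Measurable g)
    (hfgh : ∀ x y, f x ^ a * g y ^ b ≤ h (a * x + b * y)) {τ : ℝ≥0∞} (hτf : τ < ⨆ x, f x)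
    (hτg : τ < ⨆ x, g x) :
    ENNReal.ofReal a * volume {x | τ < f x} + ENNReal.ofReal b * volume {x | τ < g x} ≤
      volume {x | τ < h x} := by
  refine ofReal_mul_volume_add_le ha hb (measurableSet_lt measurable_const hf)
    (measurableSet_lt measurable_const hg) (lt_iSup_iff.1 hτf) (lt_iSup_iff.1 hτg) ?_
  rintro _ ⟨_, ⟨x, hx, rfl⟩, _, ⟨y, hy, rfl⟩, rfl⟩
  refine lt_of_lt_of_le ?_ (hfgh x y)
  calc τ = τ ^ a * τ ^ b := by
        rw [← ENNReal.rpow_add_of_nonneg _ _ ha.le hb.le, hab, ENNReal.rpow_one]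
    _ < f x ^ a * g y ^ b :=
        ENNReal.mul_lt_mul (ENNReal.rpow_lt_rpow hx ha) (ENNReal.rpow_lt_rpow hy hb)

theorem prekopaLeindler_real_of_iSup_eq_one (ha : 0 < a) (hb : 0 < b) (hab : a + b = 1)
    {f g h : ℝ → ℝ≥0∞} (hf : Measurable f) (hg : Measurable g) (hh : Measurable h)
    (hf₁ : ⨆ x, f x = 1) (hg₁ : ⨆ x, g x = 1)
    (hfgh : ∀ x y, f x ^ a * g y ^ b ≤ h (a * x + b * y)) :
    (∫⁻ x, f x) ^ a * (∫⁻ x, g x) ^ b ≤ ∫⁻ x, h x := by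
  have hf_le : ∀ x, f x ≤ 1 := fun x => hf₁ ▸ le_iSup f x
  have hg_le : ∀ x, g x ≤ 1 := fun x => hg₁ ▸ le_iSup g x
  have hmeas (k : ℝ → ℝ≥0∞) : Measurable fun t : ℝ => volume {x | ENNReal.ofReal t < k x} :=
    Antitone.measurable fun s t hst => measure_mono fun x hx =>
      (ENNReal.ofReal_le_ofReal hst).trans_lt hx
  have hlevel (t : ℝ) : ENNReal.ofReal a * volume {x | ENNReal.ofReal t < f x} +
      ENNReal.ofReal b * volume {x | ENNReal.ofReal t < g x} ≤
        volume {x | ENNReal.ofReal t < min (h x) 1} := by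
    rcases lt_or_ge (ENNReal.ofReal t) 1 with ht | ht
    · simpa [ht] using ofReal_mul_volume_lt_add_le ha hb hab hf hg hfgh (ht.trans_eq hf₁.symm)
        (ht.trans_eq hg₁.symm)
    · simp [((hf_le _).trans ht).not_gt, ((hg_le _).trans ht).not_gt]
  calc (∫⁻ x, f x) ^ a * (∫⁻ x, g x) ^ b
      ≤ ENNReal.ofReal a * (∫⁻ x, f x) + ENNReal.ofReal b * ∫⁻ x, g x :=
        ennreal_rpow_mul_rpow_le_add ha hb hab _ _
    _ ≤ ∫⁻ x, min (h x) 1 := by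
        rw [lintegral_eq_lintegral_measure_ofReal_lt _ hf
            fun x => ((hf_le x).trans_lt ENNReal.one_lt_top).ne,
          lintegral_eq_lintegral_measure_ofReal_lt _ hg
            fun x => ((hg_le x).trans_lt ENNReal.one_lt_top).ne,
          lintegral_eq_lintegral_measure_ofReal_lt _ (hh.min measurable_const)
            fun x => ((min_le_right _ _).trans_lt ENNReal.one_lt_top).ne,
          ← lintegral_const_mul _ (hmeas f), ← lintegral_const_mul _ (hmeas g),
          ← lintegral_add_left ((hmeas f).const_mul _)]
        exact lintegral_mono hlevel
    _ ≤ ∫⁻ x, h x := lintegral_mono fun x => min_le_left _ _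

theorem prekopaLeindler_real_of_bounded (ha : 0 < a) (hb : 0 < b) (hab : a + b = 1)
    {f g h : ℝ → ℝ≥0∞} (hf : Measurable f) (hg : Measurable g) (hh : Measurable h)
    (hf_top : ⨆ x, f x ≠ ∞) (hg_top : ⨆ x, g x ≠ ∞)
    (hfgh : ∀ x y, f x ^ a * g y ^ b ≤ h (a * x + b * y)) :
    (∫⁻ x, f x) ^ a * (∫⁻ x, g x) ^ b ≤ ∫⁻ x, h x := by
  by_cases hf₀ : ⨆ x, f x = 0
  · simp [ENNReal.iSup_eq_zero.1 hf₀, ha]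
  by_cases hg₀ : ⨆ x, g x = 0
  · simp [ENNReal.iSup_eq_zero.1 hg₀, hb]
  set M := ⨆ x, f x
  set N := ⨆ x, g x
  have hM : M⁻¹ ^ a ≠ 0 ∧ M⁻¹ ^ a ≠ ∞ := by simp [ha, hf₀, hf_top, ha.not_gt]
  have hN : N⁻¹ ^ b ≠ 0 ∧ N⁻¹ ^ b ≠ ∞ := by simp [hb, hg₀, hg_top, hb.not_gt]
  have hpow (u v : ℝ≥0∞) :
      (M⁻¹ * u) ^ a * (N⁻¹ * v) ^ b = M⁻¹ ^ a * N⁻¹ ^ b * (u ^ a * v ^ b) := by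
    rw [ENNReal.mul_rpow_of_nonneg _ _ ha.le, ENNReal.mul_rpow_of_nonneg _ _ hb.le,
      mul_mul_mul_comm]
  have hnormalized := prekopaLeindler_real_of_iSup_eq_one ha hb hab (f := fun x => M⁻¹ * f x)
    (g := fun x => N⁻¹ * g x) (h := fun x => M⁻¹ ^ a * N⁻¹ ^ b * h x)
    (hf.const_mul _) (hg.const_mul _) (hh.const_mul _)
    (by rw [← ENNReal.mul_iSup, ENNReal.inv_mul_cancel hf₀ hf_top])
    (by rw [← ENNReal.mul_iSup, ENNReal.inv_mul_cancel hg₀ hg_top])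
    fun x y => (hpow _ _).trans_le (mul_le_mul_right (hfgh x y) _)
  rw [lintegral_const_mul _ hf, lintegral_const_mul _ hg, lintegral_const_mul _ hh, hpow]
    at hnormalized
  exact (ENNReal.mul_le_mul_iff_right (mul_ne_zero hM.1 hN.1)
    (ENNReal.mul_ne_top hM.2 hN.2)).1 hnormalized

theorem tendsto_lintegral_min_natCast {α : Type*} [MeasurableSpace α] (μ : Measure α)
    {f : α → ℝ≥0∞} (hf : Measurable f) :
    Filter.Tendsto (fun k : ℕ => ∫⁻ x, min (f x) k ∂μ) Filter.atTop (nhds (∫⁻ x, f x ∂μ)) := by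
  refine lintegral_tendsto_of_tendsto_of_monotone
    (fun k => (hf.min measurable_const).aemeasurable)
    (ae_of_all _ fun x j k hjk => min_le_min_left _ (by exact_mod_cast hjk))
    (ae_of_all _ fun x => ?_)
  simpa using tendsto_const_nhds.min ENNReal.tendsto_nat_nhds_top

theorem prekopaLeindler_real : PrekopaLeindler (volume : Measure ℝ) := by
  intro a b ha hb hab f g h hf hg hh hfgh
  have htrunc (k : ℕ) : (∫⁻ x, min (f x) k) ^ a * (∫⁻ x, min (g x) k) ^ b ≤ ∫⁻ x, h x := by
    have hfin (u : ℝ → ℝ≥0∞) : ⨆ x, min (u x) (k : ℝ≥0∞) ≠ ∞ :=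
      ((iSup_le fun x => min_le_right _ _).trans_lt (ENNReal.natCast_lt_top k)).ne
    refine prekopaLeindler_real_of_bounded ha hb hab (hf.min measurable_const)
      (hg.min measurable_const) hh (hfin f) (hfin g) fun x y => le_trans ?_ (hfgh x y)
    gcongr <;> exact min_le_left _ _
  by_cases hf₀ : ∫⁻ x, f x = 0
  · simp [hf₀, ha]
  by_cases hg₀ : ∫⁻ x, g x = 0
  · simp [hg₀, hb]
  refine le_of_tendsto' (ENNReal.Tendsto.mul
    ((tendsto_lintegral_min_natCast volume hf).ennrpow_const a) (Or.inl ?_)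
    ((tendsto_lintegral_min_natCast volume hg).ennrpow_const b) (Or.inl ?_)) htrunc
  · simp [hf₀, ha.not_gt]
  · simp [hg₀, hb.not_gt]

namespace PrekopaLeindler

variable {E F : Type*} [MeasurableSpace E] [AddCommMonoid E] [Module ℝ E] [MeasurableSpace F]
  [AddCommMonoid F] [Module ℝ F] {μ : Measure E} {ν : Measure F}

theorem smul (hμ : PrekopaLeindler μ) (c : ℝ≥0∞) : PrekopaLeindler (c • μ) := by
  intro a b ha hb hab f g h hf hg hh hfgh
  simp only [lintegral_smul_measure, smul_eq_mul]
  calc (c * ∫⁻ x, f x ∂μ) ^ a * (c * ∫⁻ x, g x ∂μ) ^ b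
      = c * ((∫⁻ x, f x ∂μ) ^ a * (∫⁻ x, g x ∂μ) ^ b) := by
        rw [ENNReal.mul_rpow_of_nonneg _ _ ha.le, ENNReal.mul_rpow_of_nonneg _ _ hb.le,
          mul_mul_mul_comm, ← ENNReal.rpow_add_of_nonneg _ _ ha.le hb.le, hab, ENNReal.rpow_one]
    _ ≤ c * ∫⁻ x, h x ∂μ := mul_le_mul_right (hμ ha hb hab hf hg hh hfgh) c

theorem map (hμ : PrekopaLeindler μ) {T : E → F} (hT : Measurable T) (hlin : IsLinearMap ℝ T) :
    PrekopaLeindler (μ.map T) := by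
  intro a b ha hb hab f g h hf hg hh hfgh
  rw [lintegral_map hf hT, lintegral_map hg hT, lintegral_map hh hT]
  refine hμ ha hb hab (hf.comp hT) (hg.comp hT) (hh.comp hT) fun x y => ?_
  simpa only [Function.comp, hlin.map_add, hlin.map_smul] using hfgh (T x) (T y)

theorem prod [SFinite ν] (hμ : PrekopaLeindler μ) (hν : PrekopaLeindler ν) :
    PrekopaLeindler (μ.prod ν) := by
  intro a b ha hb hab f g h hf hg hh hfgh
  rw [lintegral_prod _ hf.aemeasurable, lintegral_prod _ hg.aemeasurable,
    lintegral_prod _ hh.aemeasurable]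
  refine hμ ha hb hab hf.lintegral_prod_right' hg.lintegral_prod_right' hh.lintegral_prod_right'
    fun s t => ?_
  exact hν ha hb hab (hf.comp measurable_prodMk_left) (hg.comp measurable_prodMk_left)
    (hh.comp measurable_prodMk_left) fun x y => hfgh (s, x) (t, y)

theorem withDensity (hμ : PrekopaLeindler μ) {g : E → ℝ} (hg : IsLogConcave g)
    (hgm : Measurable g) : PrekopaLeindler (μ.withDensity fun x => ENNReal.ofReal (g x)) := by
  intro a b ha hb hab u v w hu hv hw huvw
  have hG : Measurable fun x => ENNReal.ofReal (g x) := hgm.ennreal_ofReal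
  simp only [lintegral_withDensity_eq_lintegral_mul _ hG, hu, hv, hw]
  refine hμ ha hb hab (hG.mul hu) (hG.mul hv) (hG.mul hw) fun x y => ?_
  simp only [Pi.mul_apply]
  calc (ENNReal.ofReal (g x) * u x) ^ a * (ENNReal.ofReal (g y) * v y) ^ b
      = ENNReal.ofReal (g x ^ a * g y ^ b) * (u x ^ a * v y ^ b) := by
        rw [ENNReal.mul_rpow_of_nonneg _ _ ha.le, ENNReal.mul_rpow_of_nonneg _ _ hb.le,
          mul_mul_mul_comm, ENNReal.ofReal_mul (rpow_nonneg (hg.1 x) a),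
          ENNReal.ofReal_rpow_of_nonneg (hg.1 x) ha.le,
          ENNReal.ofReal_rpow_of_nonneg (hg.1 y) hb.le]
    _ ≤ ENNReal.ofReal (g (a • x + b • y)) * w (a • x + b • y) :=
        mul_le_mul' (ENNReal.ofReal_le_ofReal (hg.2 x y a b ha.le hb.le hab)) (huvw x y)

end PrekopaLeindler

theorem prekopaLeindler_pi (n : ℕ) : PrekopaLeindler (volume : Measure (Fin n → ℝ)) := by
  induction n with
  | zero =>
    intro a b _ _ _ f g h _ _ _ hfgh
    rw [volume_pi, Measure.pi_of_empty _ 0, lintegral_dirac, lintegral_dirac, lintegral_dirac]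
    simpa using hfgh 0 0
  | succ n ih =>
    have hT := volume_preserving_piFinSuccAbove (fun _ : Fin (n + 1) => ℝ) 0
    rw [← hT.symm.map_eq]
    refine (prekopaLeindler_real.prod ih).map hT.symm.measurable ?_
    constructor <;> intros <;> rw [MeasurableEquiv.symm_apply_eq] <;> ext <;>
      simp [MeasurableEquiv.piFinSuccAbove, Fin.tail]

theorem prekopaLeindler_addHaar {E : Type*} [NormedAddCommGroup E] [NormedSpace ℝ E]
    [FiniteDimensional ℝ E] [MeasurableSpace E] [BorelSpace E] (μ : Measure E)
    [μ.IsAddHaarMeasure] : PrekopaLeindler μ := by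
  let T : E ≃L[ℝ] (Fin (Module.finrank ℝ E) → ℝ) := ContinuousLinearEquiv.ofFinrankEq (by simp)
  have hmap : (μ.map T).map T.symm = μ := by
    rw [Measure.map_map T.symm.continuous.measurable T.continuous.measurable]
    simp
  have := T.isAddHaarMeasure_map μ
  rw [← hmap, Measure.isAddLeftInvariant_eq_smul (μ.map T) volume]
  exact ((prekopaLeindler_pi _).smul _).map T.symm.continuous.measurable
    T.symm.toLinearMap.isLinear

end PrekopaLeindler

section IsLogConcave

variable {E : Type*}

theorem IsLogConcave.convex_pos [AddCommMonoid E] [SMul ℝ E] {g : E → ℝ} (hg : IsLogConcave g) :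
    Convex ℝ {x | 0 < g x} := fun x hx y hy a b ha hb hab =>
  (mul_pos (rpow_pos_of_pos hx a) (rpow_pos_of_pos hy b)).trans_le (hg.2 x y a b ha hb hab)

theorem IsLogConcave.concaveOn_log [AddCommMonoid E] [SMul ℝ E] {g : E → ℝ} (hg : IsLogConcave g) :
    ConcaveOn ℝ {x | 0 < g x} fun x => log (g x) := by
  refine ⟨hg.convex_pos, fun x (hx : 0 < g x) y (hy : 0 < g y) a b ha hb hab => ?_⟩
  have hlog := log_le_log (by positivity) (hg.2 x y a b ha hb hab)
  rwa [log_mul (by positivity) (by positivity), log_rpow hx, log_rpow hy] at hlog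

theorem IsLogConcave.indicator [AddCommMonoid E] [Module ℝ E] {g : E → ℝ} (hg : IsLogConcave g)
    {S : Set E} (hS : Convex ℝ S) : IsLogConcave (S.indicator g) := by
  have hnonneg (x : E) : 0 ≤ S.indicator g x := indicator_nonneg (fun x _ => hg.1 x) x
  refine ⟨hnonneg, fun x y a b ha hb hab => ?_⟩
  rcases ha.eq_or_lt with rfl | ha
  · obtain rfl : b = 1 := by linarith
    simp
  rcases hb.eq_or_lt with rfl | hb
  · obtain rfl : a = 1 := by linarith
    simp
  by_cases hx : x ∈ S
  · by_cases hy : y ∈ S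
    · simpa [hx, hy, hS hx hy ha.le hb.le hab] using hg.2 x y a b ha.le hb.le hab
    · simpa [hy, zero_rpow hb.ne'] using hnonneg (a • x + b • y)
  · simpa [hx, zero_rpow ha.ne'] using hnonneg (a • x + b • y)

theorem IsLogConcave.exists_measurable_ae_eq [NormedAddCommGroup E] [NormedSpace ℝ E]
    [FiniteDimensional ℝ E] [MeasurableSpace E] [BorelSpace E] (μ : Measure E)
    [μ.IsAddHaarMeasure] {g : E → ℝ} (hg : IsLogConcave g) :
    ∃ g' : E → ℝ, IsLogConcave g' ∧ Measurable g' ∧ g' =ᵐ[μ] g := by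
  -- Cutting `g` off outside the interior of its support makes it continuous on an open set, and
  -- changes it only on the boundary of a convex set.
  classical
  set S := interior {x | 0 < g x}
  refine ⟨S.indicator g, hg.indicator hg.convex_pos.interior, ?_, ?_⟩
  · rw [← piecewise_eq_indicator]
    refine ContinuousOn.measurable_piecewise ?_ continuousOn_const isOpen_interior.measurableSet
    exact hg.concaveOn_log.continuousOn_interior.rexp.congr
      fun x hx => (exp_log (show x ∈ {x | 0 < g x} from interior_subset hx)).symm
  · filter_upwards [measure_eq_zero_iff_ae_notMem.1 (hg.convex_pos.addHaar_frontier μ)] with x hx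
    by_cases hxS : x ∈ S
    · exact indicator_of_mem hxS g
    · have hgx : ¬0 < g x := fun h => hx ⟨subset_closure h, hxS⟩
      rw [indicator_of_notMem hxS, le_antisymm (not_lt.1 hgx) (hg.1 x)]

end IsLogConcave

section Balls

theorem PrekopaLeindler.measure_rpow_mul_measure_rpow_le {E : Type*} [MeasurableSpace E]
    [AddCommMonoid E] [SMul ℝ E] {μ : Measure E} (hμ : PrekopaLeindler μ) {a b : ℝ} (ha : 0 < a)
    (hb : 0 < b) (hab : a + b = 1) {A B C : Set E} (hA : MeasurableSet A) (hB : MeasurableSet B)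
    (hC : MeasurableSet C) (hABC : a • A + b • B ⊆ C) : μ A ^ a * μ B ^ b ≤ μ C := by
  rw [← lintegral_indicator_one hA, ← lintegral_indicator_one hB, ← lintegral_indicator_one hC]
  refine hμ ha hb hab (measurable_const.indicator hA) (measurable_const.indicator hB)
    (measurable_const.indicator hC) fun x y => ?_
  by_cases hx : x ∈ A
  · by_cases hy : y ∈ B
    · have hxy : a • x + b • y ∈ C :=
        hABC (add_mem_add (smul_mem_smul_set hx) (smul_mem_smul_set hy))
      simp [hx, hy, hxy]
    · simp [hy, ENNReal.zero_rpow_of_pos hb]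
  · simp [hx, ENNReal.zero_rpow_of_pos ha]

variable {E : Type*} [SeminormedAddCommGroup E] [NormedSpace ℝ E] [MeasurableSpace E]
  [OpensMeasurableSpace E] {μ : Measure E}

theorem PrekopaLeindler.measure_closedBall_rpow_mul_le (hμ : PrekopaLeindler μ) {a b : ℝ}
    (ha : 0 ≤ a) (hb : 0 ≤ b) (hab : a + b = 1) (x y : E) (c : ℝ) :
    μ (closedBall x c) ^ a * μ (closedBall y c) ^ b ≤ μ (closedBall (a • x + b • y) c) := by
  rcases ha.eq_or_lt with rfl | ha
  · obtain rfl : b = 1 := by linarith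
    simp
  rcases hb.eq_or_lt with rfl | hb
  · obtain rfl : a = 1 := by linarith
    simp
  refine hμ.measure_rpow_mul_measure_rpow_le ha hb hab measurableSet_closedBall
    measurableSet_closedBall measurableSet_closedBall ?_
  rintro _ ⟨_, ⟨x', hx', rfl⟩, _, ⟨y', hy', rfl⟩, rfl⟩
  rw [mem_closedBall] at hx' hy' ⊢
  calc dist (a • x' + b • y') (a • x + b • y)
      ≤ dist (a • x') (a • x) + dist (b • y') (b • y) := dist_add_add_le _ _ _ _
    _ = a * dist x' x + b * dist y' y := by
        rw [dist_smul₀, dist_smul₀, norm_of_nonneg ha.le, norm_of_nonneg hb.le]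
    _ ≤ a * c + b * c := by gcongr
    _ = c := by rw [← add_mul, hab, one_mul]

theorem PrekopaLeindler.measure_closedBall_add_mul_le (hμ : PrekopaLeindler μ) {x y : E}
    (hxy : SameRay ℝ x y) (c : ℝ) :
    μ (closedBall (x + y) c) * μ (closedBall 0 c) ≤ μ (closedBall x c) * μ (closedBall y c) := by
  obtain ⟨a, b, ha, hb, hab, hx, hy⟩ := hxy.exists_eq_smul_add
  set z := x + y
  calc μ (closedBall z c) * μ (closedBall 0 c)
      = (μ (closedBall z c) ^ a * μ (closedBall 0 c) ^ b) *
          (μ (closedBall z c) ^ b * μ (closedBall 0 c) ^ a) := by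
        rw [mul_mul_mul_comm, ← ENNReal.rpow_add_of_nonneg _ _ ha hb,
          ← ENNReal.rpow_add_of_nonneg _ _ hb ha, add_comm b a, hab, ENNReal.rpow_one,
          ENNReal.rpow_one]
    _ ≤ μ (closedBall x c) * μ (closedBall y c) := by
        rw [hx, hy]
        gcongr
        · simpa using hμ.measure_closedBall_rpow_mul_le ha hb hab z 0 c
        · simpa using hμ.measure_closedBall_rpow_mul_le hb ha (add_comm b a ▸ hab) z 0 c

theorem lintegral_mul_measure_closedBall {X : Type*} [PseudoMetricSpace X]
    [SecondCountableTopology X] [MeasurableSpace X] [OpensMeasurableSpace X] (μ ν : Measure X)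
    [SFinite μ] [SFinite ν] {f : X → ℝ≥0∞} (hf : Measurable f) (c : ℝ) :
    ∫⁻ x, f x * μ (closedBall x c) ∂ν = ∫⁻ y, ∫⁻ x in closedBall y c, f x ∂ν ∂μ := by
  have hS : MeasurableSet {q : X × X | dist q.1 q.2 ≤ c} :=
    measurableSet_le measurable_dist measurable_const
  calc ∫⁻ x, f x * μ (closedBall x c) ∂ν
      = ∫⁻ x, ∫⁻ y, {q : X × X | dist q.1 q.2 ≤ c}.indicator (fun q => f q.1) (x, y) ∂μ ∂ν := by
        refine lintegral_congr fun x => ?_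
        rw [← setLIntegral_const, ← lintegral_indicator measurableSet_closedBall]
        simp only [indicator, mem_closedBall, mem_ofPred_eq, dist_comm]
    _ = ∫⁻ y, ∫⁻ x, {q : X × X | dist q.1 q.2 ≤ c}.indicator (fun q => f q.1) (x, y) ∂ν ∂μ :=
        lintegral_lintegral_swap ((hf.comp measurable_fst).indicator hS).aemeasurable
    _ = ∫⁻ y, ∫⁻ x in closedBall y c, f x ∂ν ∂μ :=
        lintegral_congr fun y => lintegral_indicator measurableSet_closedBall f

end Balls

section Submultiplicative

theorem sameRay_of_mul_nonneg {s t : ℝ} (hst : 0 ≤ s * t) : SameRay ℝ s t := by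
  rw [sameRay_iff_norm_smul_eq, Real.norm_eq_abs, Real.norm_eq_abs, smul_eq_mul, smul_eq_mul]
  rcases mul_nonneg_iff.1 hst with ⟨hs, ht⟩ | ⟨hs, ht⟩
  · rw [abs_of_nonneg hs, abs_of_nonneg ht, mul_comm]
  · rw [abs_of_nonpos hs, abs_of_nonpos ht]
    ring

theorem enorm_cube_le_lintegral_enorm_mul_enorm_sub (u : ℝ) :
    ‖u‖ₑ ^ 3 ≤ 16 * ∫⁻ s in {s | 0 ≤ s * (u - s)}, ‖s‖ₑ * ‖u - s‖ₑ := by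
  -- On the middle half of the segment `[0, u]` the integrand is at least `u ^ 2 / 8`.
  have hmid : ∀ s ∈ closedBall (u / 2) (|u| / 4), u ^ 2 / 8 ≤ s * (u - s) := by
    intro s hs
    rw [mem_closedBall, Real.dist_eq] at hs
    have hsq : (s - u / 2) ^ 2 ≤ (u / 4) ^ 2 := by
      rw [sq_le_sq, abs_div, abs_of_pos (four_pos : (0 : ℝ) < 4)]
      exact hs
    nlinarith
  calc ‖u‖ₑ ^ 3 = 16 * ∫⁻ _ in closedBall (u / 2) (|u| / 4), ENNReal.ofReal (u ^ 2 / 8) := by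
        rw [setLIntegral_const, volume_closedBall, ← ENNReal.ofReal_mul (by positivity),
          ← ENNReal.ofReal_ofNat 16, ← ENNReal.ofReal_mul (by positivity), ← ofReal_norm,
          ← ENNReal.ofReal_pow (norm_nonneg u), Real.norm_eq_abs, ← sq_abs u]
        congr 1
        ring
    _ ≤ 16 * ∫⁻ s in closedBall (u / 2) (|u| / 4), ‖s‖ₑ * ‖u - s‖ₑ := by
        gcongr 16 * ?_
        refine setLIntegral_mono (by fun_prop) fun s hs => ?_
        rw [← enorm_mul, Real.enorm_of_nonneg (le_trans (by positivity) (hmid s hs))]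
        exact ENNReal.ofReal_le_ofReal (hmid s hs)
    _ ≤ 16 * ∫⁻ s in {s | 0 ≤ s * (u - s)}, ‖s‖ₑ * ‖u - s‖ₑ := by
        gcongr 16 * ?_
        exact lintegral_mono_set fun s hs => le_trans (by positivity) (hmid s hs)

theorem mul_lintegral_enorm_cube_mul_le {D : ℝ → ℝ≥0∞} (hD : Measurable D)
    (hsub : ∀ s t, 0 ≤ s * t → D (s + t) * D 0 ≤ D s * D t) :
    D 0 * ∫⁻ u, ‖u‖ₑ ^ 3 * D u ≤ 16 * (∫⁻ s, ‖s‖ₑ * D s) ^ 2 := by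
  have hpoint (u : ℝ) :
      D 0 * (‖u‖ₑ ^ 3 * D u) ≤ 16 * ∫⁻ s, ‖s‖ₑ * D s * (‖u - s‖ₑ * D (u - s)) :=
    calc D 0 * (‖u‖ₑ ^ 3 * D u)
        ≤ 16 * (∫⁻ s in {s | 0 ≤ s * (u - s)}, ‖s‖ₑ * ‖u - s‖ₑ) * (D u * D 0) := by
          rw [mul_left_comm, mul_comm (D 0)]
          gcongr
          exact enorm_cube_le_lintegral_enorm_mul_enorm_sub u
      _ = 16 * ∫⁻ s in {s | 0 ≤ s * (u - s)}, ‖s‖ₑ * ‖u - s‖ₑ * (D u * D 0) := by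
          rw [lintegral_mul_const _ (by fun_prop), mul_assoc]
      _ ≤ 16 * ∫⁻ s in {s | 0 ≤ s * (u - s)}, ‖s‖ₑ * D s * (‖u - s‖ₑ * D (u - s)) := by
          gcongr 16 * ?_
          refine setLIntegral_mono (by fun_prop) fun s hs => ?_
          have hDu := hsub s (u - s) hs
          rw [add_sub_cancel] at hDu
          rw [mul_mul_mul_comm ‖s‖ₑ (D s)]
          gcongr
      _ ≤ 16 * ∫⁻ s, ‖s‖ₑ * D s * (‖u - s‖ₑ * D (u - s)) := by
          gcongr 16 * ?_
          exact setLIntegral_le_lintegral _ _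
  calc D 0 * ∫⁻ u, ‖u‖ₑ ^ 3 * D u = ∫⁻ u, D 0 * (‖u‖ₑ ^ 3 * D u) :=
        (lintegral_const_mul _ (by fun_prop)).symm
    _ ≤ ∫⁻ u, 16 * ∫⁻ s, ‖s‖ₑ * D s * (‖u - s‖ₑ * D (u - s)) := lintegral_mono hpoint
    _ = 16 * ∫⁻ u, ∫⁻ s, ‖s‖ₑ * D s * (‖u - s‖ₑ * D (u - s)) :=
        lintegral_const_mul' _ _ ENNReal.ofNat_ne_top
    _ = 16 * ∫⁻ s, ∫⁻ u, ‖s‖ₑ * D s * (‖u - s‖ₑ * D (u - s)) := by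
        rw [lintegral_lintegral_swap]
        fun_prop
    _ = 16 * ∫⁻ s, ‖s‖ₑ * D s * ∫⁻ u, ‖u‖ₑ * D u := by
        congr 1
        refine lintegral_congr fun s => ?_
        rw [lintegral_const_mul _ (by fun_prop),
          lintegral_sub_right_eq_self (fun u => ‖u‖ₑ * D u)]
    _ = 16 * (∫⁻ s, ‖s‖ₑ * D s) ^ 2 := by
        rw [lintegral_mul_const _ (by fun_prop), sq]

end Submultiplicative

section ThirdMoment

theorem ofReal_mul_enorm_pow_le_lintegral_closedBall (y c : ℝ) (k : ℕ) :
    ENNReal.ofReal c * ‖y‖ₑ ^ k ≤ ∫⁻ s in closedBall y c, ‖s‖ₑ ^ k := by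
  -- `‖s‖ ≥ ‖y‖` on the half of the ball that points away from the origin.
  obtain ⟨T, hTvol, hTball, hTnorm⟩ : ∃ T : Set ℝ, volume T = ENNReal.ofReal c ∧
      T ⊆ closedBall y c ∧ ∀ s ∈ T, |y| ≤ |s| := by
    rw [Real.closedBall_eq_Icc]
    rcases le_total 0 y with hy | hy
    · refine ⟨Icc y (y + c), by simp, fun s hs => ⟨by linarith [hs.1, hs.2], hs.2⟩,
        fun s hs => abs_le_abs_of_nonneg hy hs.1⟩
    · refine ⟨Icc (y - c) y, by simp, fun s hs => ⟨hs.1, by linarith [hs.1, hs.2]⟩,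
        fun s hs => abs_le_abs_of_nonpos hy hs.2⟩
  calc ENNReal.ofReal c * ‖y‖ₑ ^ k = ∫⁻ _ in T, ‖y‖ₑ ^ k := by
        rw [setLIntegral_const, hTvol, mul_comm]
    _ ≤ ∫⁻ s in T, ‖s‖ₑ ^ k := setLIntegral_mono (by fun_prop) fun s hs =>
        pow_le_pow_left' (enorm_le_iff_norm_le.2 (hTnorm s hs)) k
    _ ≤ ∫⁻ s in closedBall y c, ‖s‖ₑ ^ k := lintegral_mono_set hTball

theorem lintegral_closedBall_enorm_le {c : ℝ} (hc : 0 ≤ c) (y : ℝ) :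
    ∫⁻ s in closedBall y c, ‖s‖ₑ ≤ 2 * ENNReal.ofReal c * (‖y‖ₑ + ENNReal.ofReal c) := by
  calc ∫⁻ s in closedBall y c, ‖s‖ₑ ≤ ∫⁻ _ in closedBall y c, (‖y‖ₑ + ENNReal.ofReal c) := by
        refine setLIntegral_mono measurable_const fun s hs => ?_
        rw [← ofReal_norm, ← ofReal_norm, ← ENNReal.ofReal_add (norm_nonneg y) hc]
        exact ENNReal.ofReal_le_ofReal (norm_le_of_mem_closedBall hs)
    _ = 2 * ENNReal.ofReal c * (‖y‖ₑ + ENNReal.ofReal c) := by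
        rw [setLIntegral_const, volume_closedBall, ENNReal.ofReal_mul zero_le_two,
          ENNReal.ofReal_ofNat, mul_comm]

theorem PrekopaLeindler.measure_closedBall_mul_lintegral_enorm_cube_le {μ : Measure ℝ} [SFinite μ]
    (hμ : PrekopaLeindler μ) {c : ℝ} (hc : 0 < c) :
    μ (closedBall 0 c) * ∫⁻ y, ‖y‖ₑ ^ 3 ∂μ ≤
      64 * ENNReal.ofReal c * (∫⁻ y, (‖y‖ₑ + ENNReal.ofReal c) ∂μ) ^ 2 := by
  have hD : Measurable fun s => μ (closedBall s c) :=
    measurable_measure_prodMk_left (measurableSet_le (measurable_snd.dist measurable_fst)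
      measurable_const)
  have hcube : ENNReal.ofReal c * ∫⁻ y, ‖y‖ₑ ^ 3 ∂μ ≤ ∫⁻ s, ‖s‖ₑ ^ 3 * μ (closedBall s c) := by
    rw [lintegral_mul_measure_closedBall μ volume (by fun_prop) c,
      ← lintegral_const_mul _ (by fun_prop)]
    exact lintegral_mono fun y => ofReal_mul_enorm_pow_le_lintegral_closedBall y c 3
  have hfirst : ∫⁻ s, ‖s‖ₑ * μ (closedBall s c) ≤
      2 * ENNReal.ofReal c * ∫⁻ y, (‖y‖ₑ + ENNReal.ofReal c) ∂μ := by
    rw [lintegral_mul_measure_closedBall μ volume (by fun_prop) c,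
      ← lintegral_const_mul _ (by fun_prop)]
    exact lintegral_mono (lintegral_closedBall_enorm_le hc.le)
  have hc₀ : ENNReal.ofReal c ≠ 0 := (ENNReal.ofReal_pos.2 hc).ne'
  rw [← ENNReal.mul_le_mul_iff_right hc₀ ENNReal.ofReal_ne_top]
  calc ENNReal.ofReal c * (μ (closedBall 0 c) * ∫⁻ y, ‖y‖ₑ ^ 3 ∂μ)
      = μ (closedBall 0 c) * (ENNReal.ofReal c * ∫⁻ y, ‖y‖ₑ ^ 3 ∂μ) := mul_left_comm _ _ _
    _ ≤ μ (closedBall 0 c) * ∫⁻ s, ‖s‖ₑ ^ 3 * μ (closedBall s c) := by gcongr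
    _ ≤ 16 * (∫⁻ s, ‖s‖ₑ * μ (closedBall s c)) ^ 2 :=
        mul_lintegral_enorm_cube_mul_le hD fun s t hst =>
          hμ.measure_closedBall_add_mul_le (sameRay_of_mul_nonneg hst) c
    _ ≤ 16 * (2 * ENNReal.ofReal c * ∫⁻ y, (‖y‖ₑ + ENNReal.ofReal c) ∂μ) ^ 2 := by gcongr
    _ = ENNReal.ofReal c *
          (64 * ENNReal.ofReal c * (∫⁻ y, (‖y‖ₑ + ENNReal.ofReal c) ∂μ) ^ 2) := by ring

theorem sq_lintegral_sq_le_lintegral_mul_lintegral_cube {α : Type*} [MeasurableSpace α]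
    (μ : Measure α) {f : α → ℝ≥0∞} (hf : AEMeasurable f μ) :
    (∫⁻ x, f x ^ 2 ∂μ) ^ 2 ≤ (∫⁻ x, f x ∂μ) * ∫⁻ x, f x ^ 3 ∂μ := by
  have hsqrt (u : ℝ≥0∞) : (u ^ (1 / 2 : ℝ)) ^ 2 = u := by
    rw [← ENNReal.rpow_natCast, ← ENNReal.rpow_mul]
    norm_num
  have hholder := ENNReal.lintegral_mul_norm_pow_le hf (hf.pow_const 3)
    (p := 1 / 2) (q := 1 / 2) (by norm_num) (by norm_num) (by norm_num)
  have hprod (x : α) : f x ^ (1 / 2 : ℝ) * (f x ^ 3) ^ (1 / 2 : ℝ) = f x ^ 2 := by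
    rw [← ENNReal.mul_rpow_of_nonneg _ _ (by norm_num), ← pow_succ', ← ENNReal.rpow_natCast,
      ← ENNReal.rpow_mul, ← ENNReal.rpow_natCast]
    norm_num
  simp only [hprod] at hholder
  calc (∫⁻ x, f x ^ 2 ∂μ) ^ 2
      ≤ ((∫⁻ x, f x ∂μ) ^ (1 / 2 : ℝ) * (∫⁻ x, f x ^ 3 ∂μ) ^ (1 / 2 : ℝ)) ^ 2 := by gcongr
    _ = (∫⁻ x, f x ∂μ) * ∫⁻ x, f x ^ 3 ∂μ := by rw [mul_pow, hsqrt, hsqrt]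

end ThirdMoment

section ApproxLogConcaveMeasure

/-- The analogue of `ApproxLogConcave` for measures, log-concavity being expressed by the
Prékopa–Leindler inequality. Unlike densities, such measures can be pushed forward. -/
def ApproxLogConcaveMeasure {E : Type*} [MeasurableSpace E] [AddCommMonoid E] [SMul ℝ E]
    (e : ℝ≥0∞) (P : Measure E) : Prop :=
  ∃ μ : Measure E, PrekopaLeindler μ ∧ e • μ ≤ P ∧ e • P ≤ μ

theorem lintegral_smul_le_of_smul_le {α : Type*} [MeasurableSpace α] {μ ν : Measure α}
    {e : ℝ≥0∞} (h : e • μ ≤ ν) (f : α → ℝ≥0∞) : e * ∫⁻ x, f x ∂μ ≤ ∫⁻ x, f x ∂ν := by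
  simpa using lintegral_mono' h (le_refl f)

theorem one_le_two_mul_measure_closedBall {E : Type*} [SeminormedAddCommGroup E]
    [MeasurableSpace E] [OpensMeasurableSpace E] {P : Measure E} [IsProbabilityMeasure P] {c : ℝ}
    (hc : 0 < c) (hPc : 2 * ∫⁻ y, ‖y‖ₑ ∂P ≤ ENNReal.ofReal c) : 1 ≤ 2 * P (closedBall 0 c) := by
  have hmarkov : ENNReal.ofReal c * P (closedBall 0 c)ᶜ ≤ ∫⁻ y, ‖y‖ₑ ∂P := by
    refine le_trans ?_ (mul_meas_ge_le_lintegral measurable_enorm (ENNReal.ofReal c))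
    gcongr
    intro y hy
    rw [mem_compl_iff, mem_closedBall_zero_iff, not_le] at hy
    exact (ENNReal.ofReal_le_ofReal hy.le).trans_eq (ofReal_norm y)
  have hcompl : 2 * P (closedBall 0 c)ᶜ ≤ 1 := by
    have hc₀ : ENNReal.ofReal c ≠ 0 := (ENNReal.ofReal_pos.2 hc).ne'
    rw [← ENNReal.mul_le_mul_iff_right hc₀ ENNReal.ofReal_ne_top, mul_one, mul_left_comm]
    exact (mul_le_mul_right hmarkov 2).trans hPc
  refine (ENNReal.add_le_add_iff_right ENNReal.one_ne_top).1 ?_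
  calc (1 : ℝ≥0∞) + 1 = 2 * (P (closedBall 0 c) + P (closedBall 0 c)ᶜ) := by
        rw [prob_add_prob_compl measurableSet_closedBall, mul_one, one_add_one_eq_two]
    _ ≤ 2 * P (closedBall 0 c) + 1 := by
        rw [mul_add]
        gcongr

variable {E F : Type*} [MeasurableSpace E] [AddCommMonoid E] [Module ℝ E] [MeasurableSpace F]
  [AddCommMonoid F] [Module ℝ F] {e : ℝ≥0∞}

theorem ApproxLogConcaveMeasure.map {P : Measure E} (hP : ApproxLogConcaveMeasure e P) {T : E → F}
    (hT : Measurable T) (hlin : IsLinearMap ℝ T) : ApproxLogConcaveMeasure e (P.map T) := by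
  obtain ⟨μ, hμ, hμP, hPμ⟩ := hP
  refine ⟨μ.map T, hμ.map hT hlin, ?_, ?_⟩
  · simpa only [Measure.map_smul] using Measure.map_mono hμP hT
  · simpa only [Measure.map_smul] using Measure.map_mono hPμ hT

theorem ApproxLogConcaveMeasure.lintegral_enorm_cube_le {P : Measure ℝ} [IsProbabilityMeasure P]
    (hP : ApproxLogConcaveMeasure e P) {c : ℝ} (hc : 0 < c)
    (hPc : 2 * ∫⁻ y, ‖y‖ₑ ∂P ≤ ENNReal.ofReal c) :
    e ^ 4 * ∫⁻ y, ‖y‖ₑ ^ 3 ∂P ≤ 512 * ENNReal.ofReal c ^ 3 := by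
  obtain ⟨μ, hμ, hμP, hPμ⟩ := hP
  rcases eq_or_ne e 0 with rfl | he
  · simp
  have : IsFiniteMeasure μ := by
    refine ⟨lt_top_iff_ne_top.2 fun hμ_top => ?_⟩
    have huniv := hμP univ
    simp [hμ_top, ENNReal.mul_top he] at huniv
  have hball : e ≤ 2 * μ (closedBall 0 c) :=
    calc e ≤ e * (2 * P (closedBall 0 c)) :=
          le_mul_of_one_le_right' (one_le_two_mul_measure_closedBall hc hPc)
      _ = 2 * (e • P) (closedBall 0 c) := by
          rw [Measure.smul_apply, smul_eq_mul, mul_left_comm]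
      _ ≤ 2 * μ (closedBall 0 c) := by gcongr
  have hfirst : e * ∫⁻ y, (‖y‖ₑ + ENNReal.ofReal c) ∂μ ≤ 2 * ENNReal.ofReal c :=
    calc e * ∫⁻ y, (‖y‖ₑ + ENNReal.ofReal c) ∂μ
        ≤ ∫⁻ y, (‖y‖ₑ + ENNReal.ofReal c) ∂P := lintegral_smul_le_of_smul_le hμP _
      _ = ∫⁻ y, ‖y‖ₑ ∂P + ENNReal.ofReal c := by
          rw [lintegral_add_right _ measurable_const, lintegral_const, measure_univ, mul_one]
      _ ≤ 2 * ENNReal.ofReal c := by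
          rw [two_mul]
          gcongr
          exact (le_mul_of_one_le_left' one_le_two).trans hPc
  calc e ^ 4 * ∫⁻ y, ‖y‖ₑ ^ 3 ∂P = e * e ^ 2 * (e * ∫⁻ y, ‖y‖ₑ ^ 3 ∂P) := by ring
    _ ≤ 2 * μ (closedBall 0 c) * e ^ 2 * ∫⁻ y, ‖y‖ₑ ^ 3 ∂μ := by
        gcongr
        exact lintegral_smul_le_of_smul_le hPμ _
    _ = 2 * e ^ 2 * (μ (closedBall 0 c) * ∫⁻ y, ‖y‖ₑ ^ 3 ∂μ) := by ring
    _ ≤ 2 * e ^ 2 *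
          (64 * ENNReal.ofReal c * (∫⁻ y, (‖y‖ₑ + ENNReal.ofReal c) ∂μ) ^ 2) := by
        gcongr 2 * e ^ 2 * ?_
        exact hμ.measure_closedBall_mul_lintegral_enorm_cube_le hc
    _ = 128 * ENNReal.ofReal c * (e * ∫⁻ y, (‖y‖ₑ + ENNReal.ofReal c) ∂μ) ^ 2 := by ring
    _ ≤ 128 * ENNReal.ofReal c * (2 * ENNReal.ofReal c) ^ 2 := by gcongr
    _ = 512 * ENNReal.ofReal c ^ 3 := by ring

theorem ApproxLogConcaveMeasure.sq_mul_lintegral_enorm_sq_le_of_real {P : Measure ℝ}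
    [IsProbabilityMeasure P] (hP : ApproxLogConcaveMeasure e P) :
    e ^ 2 * ∫⁻ y, ‖y‖ₑ ^ 2 ∂P ≤ 64 * (∫⁻ y, ‖y‖ₑ ∂P) ^ 2 := by
  set m := ∫⁻ y, ‖y‖ₑ ∂P with hm
  rcases eq_or_ne m ∞ with hm_top | hm_top
  · simp [hm_top]
  rcases eq_or_ne m 0 with hm_zero | hm_zero
  · rw [hm, lintegral_eq_zero_iff (by fun_prop)] at hm_zero
    have : ∫⁻ y, ‖y‖ₑ ^ 2 ∂P = 0 := by
      rw [lintegral_eq_zero_iff (by fun_prop)]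
      filter_upwards [hm_zero] with y hy
      simpa using hy
    simp [this]
  have hc : ENNReal.ofReal (2 * m).toReal = 2 * m :=
    ENNReal.ofReal_toReal (ENNReal.mul_ne_top ENNReal.ofNat_ne_top hm_top)
  have hcube : e ^ 4 * ∫⁻ y, ‖y‖ₑ ^ 3 ∂P ≤ 512 * (2 * m) ^ 3 := by
    rw [← hc]
    refine hP.lintegral_enorm_cube_le (ENNReal.toReal_pos ?_ ?_) hc.ge
    · simpa using hm_zero
    · exact ENNReal.mul_ne_top ENNReal.ofNat_ne_top hm_top
  rw [← ENNReal.pow_le_pow_left_iff two_ne_zero]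
  calc (e ^ 2 * ∫⁻ y, ‖y‖ₑ ^ 2 ∂P) ^ 2 = e ^ 4 * (∫⁻ y, ‖y‖ₑ ^ 2 ∂P) ^ 2 := by ring
    _ ≤ e ^ 4 * (m * ∫⁻ y, ‖y‖ₑ ^ 3 ∂P) := by
        gcongr
        exact sq_lintegral_sq_le_lintegral_mul_lintegral_cube P (by fun_prop)
    _ = m * (e ^ 4 * ∫⁻ y, ‖y‖ₑ ^ 3 ∂P) := mul_left_comm _ _ _
    _ ≤ m * (512 * (2 * m) ^ 3) := by gcongr
    _ = (64 * m ^ 2) ^ 2 := by ring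

theorem ApproxLogConcaveMeasure.sq_mul_lintegral_enorm_sq_le {P : Measure E}
    [IsProbabilityMeasure P] (hP : ApproxLogConcaveMeasure e P) {l : E → ℝ} (hl : Measurable l)
    (hlin : IsLinearMap ℝ l) :
    e ^ 2 * ∫⁻ x, ‖l x‖ₑ ^ 2 ∂P ≤ 64 * (∫⁻ x, ‖l x‖ₑ ∂P) ^ 2 := by
  have := Measure.isProbabilityMeasure_map (μ := P) hl.aemeasurable
  have hreal := (hP.map hl hlin).sq_mul_lintegral_enorm_sq_le_of_real
  rwa [lintegral_map (by fun_prop) hl, lintegral_map (by fun_prop) hl] at hreal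

end ApproxLogConcaveMeasure

section ConvexDomination

theorem integral_add_integral_add_integral_abs_sub_le {α : Type*} [MeasurableSpace α]
    {μ : Measure α} {f g h : α → ℝ} (hf : Integrable f μ) (hg : Integrable g μ)
    (hh : Integrable h μ) (hfh : ∀ x, f x ≤ h x) (hgh : ∀ x, g x ≤ h x) :
    ∫ x, f x ∂μ + ∫ x, g x ∂μ + ∫ x, |f x - g x| ∂μ ≤ 2 * ∫ x, h x ∂μ := by
  have habs : Integrable (fun x => |f x - g x|) μ := (hf.sub hg).abs
  rw [← integral_add hf hg, ← integral_add (hf.fun_add hg) habs, ← integral_const_mul]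
  refine integral_mono ((hf.fun_add hg).fun_add habs) (hh.const_mul 2) fun x => ?_
  rcases abs_cases (f x - g x) with ⟨habs, _⟩ | ⟨habs, _⟩ <;> linarith [hfh x, hgh x]

theorem integrable_of_measure_compl_eq_zero {X F : Type*} [TopologicalSpace X]
    [MeasurableSpace X] [OpensMeasurableSpace X] [T2Space X] [NormedAddCommGroup F]
    [SecondCountableTopologyEither X F] {μ : Measure X}
    [IsFiniteMeasureOnCompacts μ] {f : X → F} (hf : Continuous f) {K : Set X} (hK : IsCompact K)
    (hμ : μ Kᶜ = 0) : Integrable f μ := by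
  rw [← Measure.restrict_eq_self_of_ae_mem (mem_ae_iff.2 hμ : ∀ᵐ x ∂μ, x ∈ K)]
  exact hf.continuousOn.integrableOn_compact hK

variable {E : Type*} [NormedAddCommGroup E] [NormedSpace ℝ E]

theorem exists_forall_add_le_of_convexOn {φ : E → ℝ} (hφ : ConvexOn ℝ univ φ)
    (hφc : Continuous φ) (u : E) : ∃ l : E →L[ℝ] ℝ, ∀ x, φ u + l (x - u) ≤ φ x := by
  have hconvex : Convex ℝ {q : E × ℝ | φ q.1 < q.2} := by simpa using hφ.convex_strict_epigraph
  obtain ⟨f, hf⟩ := geometric_hahn_banach_open_point (x := (u, φ u)) hconvex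
    (isOpen_lt (hφc.comp continuous_fst) continuous_snd) (lt_irrefl (φ u))
  have hf_eq (x : E) (t : ℝ) : f (x, t) = f (x, 0) + t * f (0, 1) := by
    rw [← smul_eq_mul, ← map_smul, ← map_add]
    simp
  have hslope : f (0, 1) < 0 := by
    have := hf (u, φ u + 1) (lt_add_one (φ u))
    rw [hf_eq, hf_eq u (φ u)] at this
    linarith
  refine ⟨(-f (0, 1))⁻¹ • f.comp (ContinuousLinearMap.inl ℝ E ℝ), fun x => ?_⟩
  refine le_of_forall_gt fun t ht => ?_
  have hsep := hf (x, t) ht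
  have hsub : f (x - u, 0) = f (x, 0) - f (u, 0) := by
    rw [← map_sub]
    simp
  rw [hf_eq, hf_eq u] at hsep
  have : (-f (0, 1))⁻¹ * f (x - u, 0) < t - φ u := by
    rw [inv_mul_lt_iff₀ (neg_pos.2 hslope), hsub]
    linarith
  simp only [smul_apply, ContinuousLinearMap.comp_apply,
    ContinuousLinearMap.inl_apply, smul_eq_mul]
  linarith

variable [MeasurableSpace E]

/-- The measure `P` convexly dominates the measure `r`. Test functions are those integrable with
respect to `P`, and integrability with respect to `r` is part of the claim, so that neither Bochner
integral is a junk value. -/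
def ConvexlyDominates (P r : Measure E) : Prop :=
  ∀ φ : E → ℝ, ConvexOn ℝ univ φ → Integrable φ P → Integrable φ r ∧ ∫ x, φ x ∂r ≤ ∫ x, φ x ∂P

theorem integral_const_add_apply [CompleteSpace E] {P : Measure E} [IsProbabilityMeasure P]
    (hPint : Integrable (fun x => x) P) (hPmean : ∫ x, x ∂P = 0) (k : ℝ) (l : E →L[ℝ] ℝ) :
    ∫ x, k + l x ∂P = k := by
  rw [integral_add (integrable_const k) (l.integrable_comp hPint), l.integral_comp_comm hPint,
    hPmean]
  simp

theorem exists_forall_le_integral_add [CompleteSpace E] {P : Measure E}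
    [IsProbabilityMeasure P] (hPint : Integrable (fun x => x) P) (hPmean : ∫ x, x ∂P = 0) {δ : ℝ}
    (hδ : ∀ l : E →L[ℝ] ℝ, 2 * δ * ‖l‖ ≤ ∫ x, |l x| ∂P) {φ : E → ℝ} (hφ : ConvexOn ℝ univ φ)
    (hφc : Continuous φ) (hφP : Integrable φ P) :
    ∃ l : E →L[ℝ] ℝ, ∀ u ∈ closedBall (0 : E) δ, φ u ≤ (∫ x, φ x ∂P) + l u := by
  have haffine_int (l : E →L[ℝ] ℝ) (k : ℝ) : Integrable (fun x => k + l x) P :=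
    (integrable_const k).fun_add (l.integrable_comp hPint)
  obtain ⟨l₀, hl₀⟩ := exists_forall_add_le_of_convexOn hφ hφc 0
  refine ⟨l₀, fun u hu => ?_⟩
  obtain ⟨l₁, hl₁⟩ := exists_forall_add_le_of_convexOn hφ hφc u
  set k := φ u - l₁ u
  have hφ₁ (x : E) : k + l₁ x ≤ φ x := by
    have := hl₁ x
    rw [map_sub] at this
    linarith
  have hφ₀ (x : E) : k + l₀ x ≤ φ x := by
    have hk_le : k ≤ φ 0 := by simpa using hφ₁ 0
    have hsupport : φ 0 + l₀ x ≤ φ x := by simpa using hl₀ x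
    linarith
  have hlu : (l₁ - l₀) u ≤ δ * ‖l₁ - l₀‖ := by
    rw [mul_comm]
    exact (le_abs_self _).trans
      ((l₁ - l₀).le_of_opNorm_le_of_le le_rfl (mem_closedBall_zero_iff.1 hu))
  have hmax := integral_add_integral_add_integral_abs_sub_le (haffine_int l₁ k)
    (haffine_int l₀ k) hφP hφ₁ hφ₀
  simp only [integral_const_add_apply hPint hPmean, add_sub_add_left_eq_sub, ← sub_apply] at hmax
  calc φ u = k + (l₁ - l₀) u + l₀ u := by rw [sub_apply]; ring
    _ ≤ k + (∫ x, |(l₁ - l₀) x| ∂P) / 2 + l₀ u := by linarith [hδ (l₁ - l₀)]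
    _ ≤ (∫ x, φ x ∂P) + l₀ u := by linarith

theorem convexlyDominates_of_measure_closedBall_compl [FiniteDimensional ℝ E] [BorelSpace E]
    {P : Measure E} [IsProbabilityMeasure P] (hPint : Integrable (fun x => x) P)
    (hPmean : ∫ x, x ∂P = 0) {δ : ℝ} (hδ : ∀ l : E →L[ℝ] ℝ, 2 * δ * ‖l‖ ≤ ∫ x, |l x| ∂P)
    {r : Measure E} [IsProbabilityMeasure r] (hrmean : ∫ x, x ∂r = 0)
    (hr : r (closedBall 0 δ)ᶜ = 0) : ConvexlyDominates P r := by
  intro φ hφ hφP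
  have := FiniteDimensional.complete ℝ E
  have := FiniteDimensional.proper_real E
  have hφc : Continuous φ := continuousOn_univ.1 (hφ.continuousOn isOpen_univ)
  have hφr := integrable_of_measure_compl_eq_zero hφc (isCompact_closedBall 0 δ) hr
  have hidr : Integrable (fun x => x) r :=
    integrable_of_measure_compl_eq_zero continuous_id (isCompact_closedBall 0 δ) hr
  have hmem : ∀ᵐ u ∂r, u ∈ closedBall (0 : E) δ := mem_ae_iff.2 hr
  obtain ⟨l, hl⟩ := exists_forall_le_integral_add hPint hPmean hδ hφ hφc hφP
  refine ⟨hφr, ?_⟩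
  calc ∫ x, φ x ∂r ≤ ∫ u, ((∫ x, φ x ∂P) + l u) ∂r :=
        integral_mono_ae hφr ((integrable_const _).fun_add (l.integrable_comp hidr)) (hmem.mono hl)
    _ = ∫ x, φ x ∂P := integral_const_add_apply hidr hrmean _ l

end ConvexDomination

section Isotropic

variable {E : Type*} [NormedAddCommGroup E] [MeasurableSpace E]

theorem ApproxLogConcave.withDensity [NormedSpace ℝ E] [FiniteDimensional ℝ E]
    [BorelSpace E] (μ : Measure E) [μ.IsAddHaarMeasure] {ε : ℝ} (hε : 0 < ε) {p : E → ℝ}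
    (hp : ApproxLogConcave ε p) : ApproxLogConcaveMeasure (ENNReal.ofReal ε)
      (μ.withDensity fun x => ENNReal.ofReal (p x)) := by
  obtain ⟨g, hg, hgp⟩ := hp
  obtain ⟨g', hg', hg'meas, hg'g⟩ := hg.exists_measurable_ae_eq μ
  refine ⟨μ.withDensity fun x => ENNReal.ofReal (g' x),
    (prekopaLeindler_addHaar μ).withDensity hg' hg'meas, ?_, ?_⟩
  · rw [← withDensity_smul' _ _ ENNReal.ofReal_ne_top]
    refine withDensity_mono (hg'g.mono fun x hx => ?_)
    simp only [Pi.smul_apply, smul_eq_mul, hx, ← ENNReal.ofReal_mul hε.le]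
    exact ENNReal.ofReal_le_ofReal (hgp x).1
  · rw [← withDensity_smul' _ _ ENNReal.ofReal_ne_top]
    refine withDensity_mono (hg'g.mono fun x hx => ?_)
    simp only [Pi.smul_apply, smul_eq_mul, hx, ← ENNReal.ofReal_mul hε.le]
    refine ENNReal.ofReal_le_ofReal ?_
    rw [← le_div_iff₀' hε, div_eq_inv_mul, ← one_div]
    exact (hgp x).2

/-- The probability measure `P` has mean zero and identity covariance, the latter being expressed
by its quadratic form on the dual space; `memLp_two` makes these integrals meaningful. -/
structure IsIsotropic [NormedSpace ℝ E] (P : Measure E) : Prop where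
  memLp_two : MemLp (fun x => x) 2 P
  integral_eq_zero : ∫ x, x ∂P = 0
  integral_sq_eq (l : E →L[ℝ] ℝ) : ∫ x, l x ^ 2 ∂P = ‖l‖ ^ 2

theorem IsIsotropic.mul_norm_le_integral_abs [NormedSpace ℝ E] [BorelSpace E] {P : Measure E}
    [IsProbabilityMeasure P] (hiso : IsIsotropic P) {ε : ℝ} (hε : 0 ≤ ε)
    (hP : ApproxLogConcaveMeasure (ENNReal.ofReal ε) P) (l : E →L[ℝ] ℝ) :
    ε * ‖l‖ ≤ 8 * ∫ x, |l x| ∂P := by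
  have hl : MemLp l 2 P := l.comp_memLp' hiso.memLp_two
  have hfirst : ∫⁻ x, ‖l x‖ₑ ∂P = ENNReal.ofReal (∫ x, |l x| ∂P) :=
    (ofReal_integral_norm_eq_lintegral_enorm (hl.integrable one_le_two)).symm
  have hsecond : ∫⁻ x, ‖l x‖ₑ ^ 2 ∂P = ENNReal.ofReal (‖l‖ ^ 2) := by
    rw [← hiso.integral_sq_eq l, ofReal_integral_eq_lintegral_ofReal hl.integrable_sq
      (ae_of_all _ fun x => sq_nonneg _)]
    refine lintegral_congr fun x => ?_
    rw [← ofReal_norm, ← ENNReal.ofReal_pow (norm_nonneg _), Real.norm_eq_abs, sq_abs]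
  have hreverse := hP.sq_mul_lintegral_enorm_sq_le l.measurable l.toLinearMap.isLinear
  rw [hfirst, hsecond, ← ENNReal.ofReal_pow hε, ← ENNReal.ofReal_mul (by positivity),
    ← ENNReal.ofReal_pow (by positivity), ← ENNReal.ofReal_ofNat 64,
    ← ENNReal.ofReal_mul (by norm_num), ENNReal.ofReal_le_ofReal_iff (by positivity)] at hreverse
  refine (sq_le_sq₀ (by positivity) (by positivity)).1 ?_
  linarith

end Isotropic

section Density

variable {α : Type*} [MeasurableSpace α] {μ : Measure α} {p : α → ℝ}

theorem isProbabilityMeasure_withDensity_ofReal (hp0 : ∀ x, 0 ≤ p x) (hp : Integrable p μ)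
    (hp1 : ∫ x, p x ∂μ = 1) :
    IsProbabilityMeasure (μ.withDensity fun x => ENNReal.ofReal (p x)) := by
  refine ⟨?_⟩
  rw [withDensity_apply _ MeasurableSet.univ, Measure.restrict_univ,
    ← ofReal_integral_eq_lintegral_ofReal hp (ae_of_all _ hp0), hp1, ENNReal.ofReal_one]

variable {F : Type*} [NormedAddCommGroup F] [NormedSpace ℝ F]

theorem integrable_withDensity_ofReal_iff (hp0 : ∀ x, 0 ≤ p x) (hp : AEMeasurable p μ) {f : α → F} :
    Integrable f (μ.withDensity fun x => ENNReal.ofReal (p x)) ↔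
      Integrable (fun x => p x • f x) μ := by
  rw [integrable_withDensity_iff_integrable_smul₀' hp.ennreal_ofReal (by simp)]
  simp only [ENNReal.toReal_ofReal (hp0 _)]

theorem integral_withDensity_ofReal (hp0 : ∀ x, 0 ≤ p x) (hp : AEMeasurable p μ) (f : α → F) :
    ∫ x, f x ∂(μ.withDensity fun x => ENNReal.ofReal (p x)) = ∫ x, p x • f x ∂μ := by
  rw [integral_withDensity_eq_integral_toReal_smul₀ hp.ennreal_ofReal (by simp)]
  simp only [ENNReal.toReal_ofReal (hp0 _)]

end Density

section EuclideanSpace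

variable {ι : Type*} [Fintype ι] [DecidableEq ι]

theorem isIsotropic_of_forall_integral_mul_eq {P : Measure (EuclideanSpace ℝ ι)}
    [IsFiniteMeasure P] (hmean : ∫ x, x ∂P = 0)
    (hcov : ∀ i j, ∫ x, x i * x j ∂P = (1 : Matrix ι ι ℝ) i j) : IsIsotropic P := by
  have hcoord (i : ι) : MemLp (fun x : EuclideanSpace ℝ ι => x i) 2 P := by
    refine (memLp_two_iff_integrable_sq (by fun_prop)).2 (Integrable.of_integral_ne_zero ?_)
    simp [sq, hcov]
  refine ⟨MemLp.of_eval_piLp hcoord, hmean, fun l => ?_⟩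
  obtain ⟨v, rfl⟩ := (InnerProductSpace.toDual ℝ (EuclideanSpace ℝ ι)).surjective l
  have hint (i j : ι) : Integrable (fun x : EuclideanSpace ℝ ι => v i * v j * (x i * x j)) P :=
    ((hcoord i).integrable_mul (hcoord j)).const_mul _
  calc ∫ x, (InnerProductSpace.toDual ℝ (EuclideanSpace ℝ ι) v) x ^ 2 ∂P
      = ∫ x, ∑ i, ∑ j, v i * v j * (x i * x j) ∂P := by
        refine integral_congr_ae (ae_of_all _ fun x => ?_)
        simp only [InnerProductSpace.toDual_apply_apply, PiLp.inner_apply, sq,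
          Finset.sum_mul_sum, RCLike.inner_apply, conj_trivial]
        exact Finset.sum_congr rfl fun i _ => Finset.sum_congr rfl fun j _ => by ring
    _ = ∑ i, ∑ j, v i * v j * (1 : Matrix ι ι ℝ) i j := by
        rw [integral_finsetSum _ fun i _ => integrable_finsetSum _ fun j _ => hint i j]
        refine Finset.sum_congr rfl fun i _ => ?_
        rw [integral_finsetSum _ fun j _ => hint i j]
        exact Finset.sum_congr rfl fun j _ => by rw [integral_const_mul, hcov]
    _ = ‖InnerProductSpace.toDual ℝ (EuclideanSpace ℝ ι) v‖ ^ 2 := by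
        rw [LinearIsometryEquiv.norm_map, EuclideanSpace.real_norm_sq_eq]
        simp [Matrix.one_apply, sq]

theorem isIsotropic_withDensity {n : ℕ} {p : EuclideanSpace ℝ (Fin n) → ℝ} (hp0 : ∀ x, 0 ≤ p x)
    (hp : Integrable p) (hmean : densMean n p = 0) (hcov : densCov n p = 1) :
    IsIsotropic (volume.withDensity fun x => ENNReal.ofReal (p x)) := by
  have := isFiniteMeasure_withDensity_ofReal hp.2
  refine isIsotropic_of_forall_integral_mul_eq ?_ fun i j => ?_
  · rw [integral_withDensity_ofReal hp0 hp.aemeasurable]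
    exact hmean
  · rw [integral_withDensity_ofReal hp0 hp.aemeasurable, ← hcov]
    simp [densCov, hmean]

end EuclideanSpace

theorem convex_domination_general
    (n : ℕ) (ε : ℝ) (hε : 0 < ε)
    (p : EuclideanSpace ℝ (Fin n) → ℝ) (hp0 : ∀ x, 0 ≤ p x) (hp1 : ∫ x, p x = 1)
    (hplc : ApproxLogConcave ε p)
    (hmean : densMean n p = 0) (hcov : densCov n p = 1)
    (r : Measure (EuclideanSpace ℝ (Fin n))) [IsProbabilityMeasure r]
    (hrmean : ∫ x, x ∂r = 0)
    (hrsupp : r (Metric.closedBall 0 (ε / 16))ᶜ = 0)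
    (φ : EuclideanSpace ℝ (Fin n) → ℝ) (hφ : ConvexOn ℝ Set.univ φ)
    (hφint : Integrable (fun x => φ x * p x)) :
    ∫ x, φ x ∂r ≤ ∫ x, φ x * p x := by
  have hp : Integrable p := .of_integral_ne_zero (by rw [hp1]; exact one_ne_zero)
  set P := volume.withDensity fun x => ENNReal.ofReal (p x)
  have : IsProbabilityMeasure P := isProbabilityMeasure_withDensity_ofReal hp0 hp hp1
  have hiso : IsIsotropic P := isIsotropic_withDensity hp0 hp hmean hcov
  have hfirst (l : EuclideanSpace ℝ (Fin n) →L[ℝ] ℝ) : 2 * (ε / 16) * ‖l‖ ≤ ∫ x, |l x| ∂P := by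
    linarith [hiso.mul_norm_le_integral_abs hε.le (hplc.withDensity volume hε) l]
  have hdom : ConvexlyDominates P r := convexlyDominates_of_measure_closedBall_compl
    (hiso.memLp_two.integrable one_le_two) hiso.integral_eq_zero hfirst hrmean hrsupp
  simp only [mul_comm (φ _), ← smul_eq_mul] at hφint ⊢
  rw [← integral_withDensity_ofReal hp0 hp.aemeasurable]
  exact (hdom φ hφ ((integrable_withDensity_ofReal_iff hp0 hp.aemeasurable).2 hφint)).2

/-- **Lemma (convex domination).** An isotropic `ε`-approximately log-concave density `p`
convexly dominates every centered probability measure supported in the ball of radius `ε/80`. -/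
theorem convex_domination
    (n : ℕ) (ε : ℝ) (hε : ε ∈ Set.Ioo (0 : ℝ) (1 / 2))
    (p : EuclideanSpace ℝ (Fin n) → ℝ) (hp0 : ∀ x, 0 ≤ p x) (hp1 : ∫ x, p x = 1)
    (hplc : ApproxLogConcave ε p)
    (hmean : densMean n p = 0) (hcov : densCov n p = 1)
    (r : Measure (EuclideanSpace ℝ (Fin n))) [IsProbabilityMeasure r]
    (hrmean : ∫ x, x ∂r = 0)
    (hrsupp : r (Metric.closedBall 0 (ε / 80))ᶜ = 0)
    (φ : EuclideanSpace ℝ (Fin n) → ℝ) (hφ : ConvexOn ℝ Set.univ φ)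
    (hφint : Integrable (fun x => φ x * p x)) :
    ∫ x, φ x ∂r ≤ ∫ x, φ x * p x := by
  refine convex_domination_general n ε hε.1 p hp0 hp1 hplc hmean hcov r hrmean ?_ φ hφ hφint
  have hradius : ε / 80 ≤ ε / 16 := by linarith [hε.1]
  exact measure_mono_null (compl_subset_compl.2 (closedBall_subset_closedBall hradius)) hrsupp
end
end
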